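/- arXiv:math/0602272 — 5 statements merged into one kernel-verified Lean document; each statement's English description precedes it below -/
import Mathlib

section
/- Let R be a commutative domain and let B be a Baer R-module, i.e. every short exact sequence 0 → T → X → B → 0 of R-modules with T torsion splits. Then B is a projective R-module. (Consequently, an R-module B is projective if and only if Ext¹_R(B, T) = 0 for every torsion R-module T.) -/
/-!
Projective modules trivially have the splitting property; the content is the converse, and over a
field there is nothing to do, so let `R` be a domain that is not a field and `B` a Baer module.

*Reduction to a square system.* Write `B = F / K` with `F` free. The splitting property says that
every map from `K` to a torsion module extends to `F` (`extends_ker`), and what is wanted is that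
the identity of `K` extends to `F`. If `K = G / N` with `G` free, embed `N` in its divisible hull
`N_Q`; extending `K → N_Q / N` to `F` and lifting it to `N_Q` shows that `N` is a direct summand of
`G`, so `K` is projective (`Extends.exists_section`). An Eilenberg swindle then replaces the
inclusion `K → F` by a map `z ↦ e z` from the basis of a free module `R^(Z)` to `R^(Z)` itself, for
one index set `Z`, such that every function `Z → T` into a torsion module has the form
`z ↦ g (e z)` with `g` linear. The task is to find `g : R^(Z) → R^(Z)` with `g (e z) = z` for all
`z` (`exists_retraction`).

*The countable case.* For `A ⊆ Z` consider the truncated system `z ↦ (e z)|_A`, `z ∈ A`. A finite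
linear system over a domain that is not a field is solvable as soon as it is solvable modulo every
`r ≠ 0` (`solve_of_mod`): multiply by a common denominator `d` of a generalized inverse and use that
no nonzero element is divisible by all nonzero elements of `R`. Testing the Baer property on direct
sums `⨁ₘ R / r_m` shows that finitely many given coordinates `y` interact with only finitely many
others (`exists_avoiding`). Hence a retraction for a countable Baer system can be built as a limit
of retractions on finite parts, each time correcting the new one so that it agrees with the old
one on more and more coordinates (`correct`, `limit`, `IsBaer.isProj`).

*Unions of countable systems.* If a countable system `A` is an increasing union of subsystems with
a retraction and every successive difference is pure (`IsFlat`: coefficients lie in the ideal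
generated by the coordinates of the combination), then the same correction argument gives a
retraction for `A` (`pure_step`, `isProj_iUnion`).

*Decomposing `Z`.* Well-order `Z`. A relation `r` on `Z` with countably many successors of each
element gives countable closures `cl r w`, and the sets `fib r w = cl r w \ ⋃_{w' < w} cl r w'`
partition `Z`. If a fibre is not Baer, choose a torsion module witnessing it; the Baer property of
the whole system for the direct sum of these witnesses provides a linear map, whose finite supports
are added to `r` (`step`). Fibres of the old relation inside the new, larger closures are then Baer,
hence have retractions. Iterating `ω` times, every fibre of the limit relation is a countable
increasing union of systems with a retraction (`pass`); in particular it is flat. In a second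
pass all closed sets are made unions of fibres of the first pass, so the successive differences are
flat (`isFlat_of_saturated`) and `isProj_iUnion` applies to every fibre. Since the system is
triangular with respect to the fibres, the retractions glue by well-founded recursion (`glue`).
-/

universe u

namespace BaerSplitting
open Finsupp
variable {R : Type u} [CommRing R] {Z : Type u}

/-! ### Systems of rows, truncation and limits of retractions -/

/-- Restriction of a finitely supported function to the coordinates in `A`, the others being set to
`0`. -/
noncomputable def res (A : Set Z) : (Z →₀ R) →ₗ[R] (Z →₀ R) :=
  linearCombination R (fun z => open Classical in if z ∈ A then single z (1 : R) else 0)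

lemma res_single_mem {A : Set Z} {z : Z} (h : z ∈ A) :
    res A (single z (1 : R)) = single z 1 := by simp [res, h]

lemma res_single_notMem {A : Set Z} {z : Z} (h : z ∉ A) :
    res A (single z (1 : R)) = 0 := by simp [res, h]

lemma res_apply (A : Set Z) [DecidablePred (· ∈ A)] (x : Z →₀ R) (z : Z) :
    res A x z = if z ∈ A then x z else 0 := by
  classical
  induction x using Finsupp.induction_linear with
  | zero => simp
  | add f g hf hg => simp only [map_add, Finsupp.add_apply, hf, hg]; split_ifs <;> simp
  | single a b =>
    simp only [res, linearCombination_single]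
    by_cases ha : a ∈ A <;> by_cases hz : z ∈ A <;> simp [ha, hz, Finsupp.single_apply] <;>
    · rintro rfl; contradiction

lemma res_apply_mem {A : Set Z} (x : Z →₀ R) {z : Z} (h : z ∈ A) : res A x z = x z := by
  classical simp [res_apply, h]

lemma res_apply_notMem {A : Set Z} (x : Z →₀ R) {z : Z} (h : z ∉ A) : res A x z = 0 := by
  classical simp [res_apply, h]

lemma supp_res {A : Set Z} (x : Z →₀ R) : (↑(res A x).support : Set Z) ⊆ A := by
  intro z hz
  by_contra h
  exact (Finsupp.mem_support_iff.1 (Finset.mem_coe.1 hz)) (res_apply_notMem x h)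

lemma map_eq_sum {M : Type*} [AddCommGroup M] [Module R M] (f : (Z →₀ R) →ₗ[R] M)
    (x : Z →₀ R) : f x = x.sum fun z r => r • f (single z 1) := by
  conv_lhs => rw [← Finsupp.sum_single x]
  rw [Finsupp.sum, map_sum]
  refine Finset.sum_congr rfl fun z _ => ?_
  simp only [← map_smul, Finsupp.smul_single, smul_eq_mul, mul_one]

/-- Two linear maps that agree on the basis vectors occurring in `x` agree at `x`. -/
lemma map_congr_supp {M : Type*} [AddCommGroup M] [Module R M] (f g : (Z →₀ R) →ₗ[R] M)
    (x : Z →₀ R) (h : ∀ z ∈ x.support, f (single z 1) = g (single z 1)) : f x = g x := by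
  rw [map_eq_sum f, map_eq_sum g]
  exact Finset.sum_congr rfl fun z hz => by simp only [h z hz]

/-- The system `e`, truncated to rows and coordinates in `A`, has a retraction: some linear `G` sends
the truncation of `e z` to the basis vector `z`, for every `z ∈ A`. -/
def IsProj (e : Z → Z →₀ R) (A : Set Z) : Prop :=
  ∃ G : (Z →₀ R) →ₗ[R] (Z →₀ R), ∀ z ∈ A, G (res A (e z)) = single z 1

/-- Purity of the system `e` truncated to `A`, in terms of ideals: if a combination `∑ k_z e_z` of
rows in `A` has its `A`-coordinates in an ideal `I`, then all coefficients `k_z` are in `I`. -/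
def IsFlat (e : Z → Z →₀ R) (A : Set Z) : Prop :=
  ∀ (I : Ideal R) (k : Z →₀ R), (↑k.support : Set Z) ⊆ A →
    (∀ j ∈ A, linearCombination R e k j ∈ I) → ∀ z, k z ∈ I

/-- Every function from `A` to a torsion module is realised by a linear map on the rows of `e`,
truncated to `A`. -/
def IsBaer (e : Z → Z →₀ R) (A : Set Z) : Prop :=
  ∀ (T : Type u) [AddCommGroup T] [Module R T], Module.IsTorsion R T → ∀ h : Z → T,
    ∃ g : (Z →₀ R) →ₗ[R] T, ∀ z ∈ A, g (res A (e z)) = h z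

lemma apply_mem_ideal (I : Ideal R) (G : (Z →₀ R) →ₗ[R] (Z →₀ R)) (x : Z →₀ R)
    (hx : ∀ z, x z ∈ I) (z : Z) : G x z ∈ I := by
  rw [map_eq_sum G x, Finsupp.sum, Finsupp.finsetSum_apply]
  refine Ideal.sum_mem _ fun j _ => ?_
  rw [Finsupp.smul_apply, smul_eq_mul]
  exact Ideal.mul_mem_right _ _ (hx j)

lemma IsProj.isFlat {e : Z → Z →₀ R} {A : Set Z} (h : IsProj e A) : IsFlat e A := by
  obtain ⟨G, hG⟩ := h
  intro I k hk hI z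
  have h1 : G (res A (linearCombination R e k)) = k := by
    have := map_congr_supp (G ∘ₗ res A ∘ₗ linearCombination R e) LinearMap.id k
      (fun z hz => by simp [hG z (hk hz)])
    simpa using this
  rw [← h1]
  refine apply_mem_ideal I G _ (fun j => ?_) z
  by_cases hj : j ∈ A
  · rw [res_apply_mem _ hj]; exact hI j hj
  · rw [res_apply_notMem _ hj]; exact I.zero_mem

/-- A retraction `G'` of the rows in `X'` can be corrected to agree on `Y` with a retraction `G` of
the rows in `X`, provided `G'` maps `Y` into the span of `X`: add `G ∘ (1 - v ∘ G')`. -/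
lemma correct {v : Z → Z →₀ R} {G G' : (Z →₀ R) →ₗ[R] (Z →₀ R)} {X X' Y : Set Z}
    (hG : ∀ z ∈ X, G (v z) = single z 1) (hG' : ∀ z ∈ X', G' (v z) = single z 1)
    (hs : ∀ y ∈ Y, (↑(G' (single y 1)).support : Set Z) ⊆ X) :
    ∃ G'' : (Z →₀ R) →ₗ[R] (Z →₀ R), (∀ z ∈ X', G'' (v z) = single z 1) ∧
      ∀ y ∈ Y, G'' (single y 1) = G (single y 1) := by
  refine ⟨G' + G ∘ₗ (LinearMap.id - linearCombination R v ∘ₗ G'), fun z hz => ?_, fun y hy => ?_⟩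
  · simp [hG' z hz]
  · have : G (linearCombination R v (G' (single y 1))) = G' (single y 1) := by
      have := map_congr_supp (G ∘ₗ linearCombination R v) LinearMap.id (G' (single y 1))
        (fun z hz => by simp [hG z (hs y hy hz)])
      simpa using this
    simp [this]

/-- Retractions on larger and larger sets of rows, which can be prolonged without changing their
values on larger and larger sets of coordinates, have a limit that is a retraction of all rows. -/
lemma limit {v : Z → Z →₀ R} {A : Set Z} (X Y : ℕ → Set Z) (hX : Monotone X) (hY : Monotone Y)
    (hAX : A ⊆ ⋃ t, X t) (hAY : A ⊆ ⋃ t, Y t)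
    (hv : ∀ z ∈ A, (↑(v z).support : Set Z) ⊆ A)
    (h0 : ∃ G : (Z →₀ R) →ₗ[R] (Z →₀ R), ∀ z ∈ X 0, G (v z) = single z 1)
    (hstep : ∀ t, ∀ G : (Z →₀ R) →ₗ[R] (Z →₀ R), (∀ z ∈ X t, G (v z) = single z 1) →
      ∃ G' : (Z →₀ R) →ₗ[R] (Z →₀ R), (∀ z ∈ X (t + 1), G' (v z) = single z 1) ∧
        ∀ y ∈ Y t, G' (single y 1) = G (single y 1)) :
    ∃ g : (Z →₀ R) →ₗ[R] (Z →₀ R), ∀ z ∈ A, g (v z) = single z 1 := by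
  choose! next hn1 hn2 using hstep
  obtain ⟨G0, hG0⟩ := h0
  let G : ℕ → (Z →₀ R) →ₗ[R] (Z →₀ R) := fun t => Nat.rec G0 (fun t g => next t g) t
  have hG : ∀ t, ∀ z ∈ X t, G t (v z) = single z 1 := by
    intro t
    induction t with
    | zero => exact hG0
    | succ t ih => exact hn1 t (G t) ih
  have hGY : ∀ s t, s ≤ t → ∀ y ∈ Y s, G t (single y 1) = G s (single y 1) := by
    intro s t hst y hy
    induction t, hst using Nat.le_induction with
    | base => rfl
    | succ t hst ih => rw [← ih]; exact hn2 t (G t) (hG t) y (hY hst hy)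
  have hn : ∀ y ∈ A, ∃ t, y ∈ Y t := fun y hy => by simpa using hAY hy
  choose! n hn using hn
  refine ⟨linearCombination R fun y => G (n y) (single y 1), fun z hz => ?_⟩
  obtain ⟨t0, ht0⟩ : ∃ t, z ∈ X t := by simpa using hAX hz
  let t := max t0 ((v z).support.sup n)
  rw [← hG t z (hX (le_max_left _ _) ht0)]
  refine map_congr_supp _ _ _ fun y hy => ?_
  have h1 : n y ≤ t := le_trans (Finset.le_sup hy) (le_max_right _ _)
  simp [hGY _ _ h1 y (hn y (hv z hz hy))]

/-! ### Increasing unions with flat differences -/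

/-- If `B \ A` is flat, a retraction of `B` can be chosen to map finitely many coordinates of `A`
into the span of `A`. One coordinate `x` is treated at a time. With `s = 1 - e ∘ G`, flatness says
that the `B \ A`-part `k` of `G x` has its coefficients in the ideal generated by the
`B \ A`-coordinates of `s x`, so `k = L (s x)` for some `L` reading only these coordinates; replace
`G` by `G - L ∘ s`. -/
lemma pure_step {e : Z → Z →₀ R} {A B : Set Z}
    (hsupp : ∀ z ∈ A, ∀ j ∈ B \ A, e z j = 0) (hflat : IsFlat e (B \ A)) (hB : IsProj e B)
    (S : Finset Z) (hS : (↑S : Set Z) ⊆ A) :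
    ∃ G : (Z →₀ R) →ₗ[R] (Z →₀ R), (∀ z ∈ B, G (res B (e z)) = single z 1) ∧
      ∀ y ∈ S, (↑(G (single y 1)).support : Set Z) ⊆ A := by
  classical
  obtain ⟨G₀, hG₀⟩ := hB
  induction S using Finset.induction_on with
  | empty =>
    exact ⟨G₀, hG₀, by simp⟩
  | insert x S hx ih =>
    obtain ⟨G₁, hG₁, hG₁S⟩ := ih (fun y hy => hS (Finset.mem_insert_of_mem hy))
    have hxA : x ∈ A := hS (Finset.mem_insert_self x S)
    let G := res B ∘ₗ G₁
    have hG : ∀ z ∈ B, G (res B (e z)) = single z 1 := fun z hz => by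
      simp [G, hG₁ z hz, res_single_mem hz]
    have hGS : ∀ y ∈ S, (↑(G (single y 1)).support : Set Z) ⊆ A := by
      intro y hy z hz
      refine hG₁S y hy ?_
      have hzB : z ∈ B := supp_res _ hz
      simp only [Finset.mem_coe, Finsupp.mem_support_iff] at hz ⊢
      rwa [← res_apply_mem (A := B) _ hzB]
    let s : (Z →₀ R) →ₗ[R] (Z →₀ R) := LinearMap.id - res B ∘ₗ linearCombination R e ∘ₗ G
    -- the `B \ A`-coordinates of `s y` are those of `-∑ G(y)_z e_z`, summed over `z ∈ B \ A`
    have hs : ∀ y ∈ A, ∀ j ∈ B \ A,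
        s (single y 1) j = -linearCombination R e (res (B \ A) (G (single y 1))) j := by
      intro y hy j hj
      have h1 : linearCombination R e (G (single y 1)) j
          = linearCombination R e (res (B \ A) (G (single y 1))) j := by
        refine map_congr_supp (Finsupp.lapply j ∘ₗ linearCombination R e)
          (Finsupp.lapply j ∘ₗ linearCombination R e ∘ₗ res (B \ A)) _ fun z hz => ?_
        have hzB : z ∈ B := supp_res (G₁ (single y 1)) hz
        by_cases hzA : z ∈ A
        · simp [hsupp z hzA j hj, res_single_notMem (A := B \ A) (fun h => h.2 hzA)]
        · simp [res_single_mem (A := B \ A) ⟨hzB, hzA⟩]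
      have h2 : (single y (1 : R)) j = 0 := by
        rw [Finsupp.single_apply, if_neg]
        rintro rfl; exact hj.2 hy
      simp [s, h2, res_apply_mem _ hj.1, h1]
    let k := res (B \ A) (G (single x 1))
    let I : Ideal R := Ideal.span (s (single x 1) '' (B \ A))
    have hkI : ∀ z, k z ∈ I := by
      refine hflat I k (supp_res _) fun j hj => ?_
      have := hs x hxA j hj
      rw [← neg_eq_iff_eq_neg] at this
      rw [← this]
      exact I.neg_mem (Ideal.subset_span ⟨j, hj, rfl⟩)
    have hlam : ∀ c ∈ I, ∃ l : (Z →₀ R) →ₗ[R] R,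
        (∀ w : Z →₀ R, (∀ j ∈ B \ A, w j = 0) → l w = 0) ∧ l (s (single x 1)) = c := by
      intro c hc
      induction hc using Submodule.span_induction with
      | mem c hc =>
        obtain ⟨j, hj, rfl⟩ := hc
        exact ⟨Finsupp.lapply j, fun w hw => hw j hj, rfl⟩
      | zero => exact ⟨0, by simp, by simp⟩
      | add a b _ _ ha hb =>
        obtain ⟨l, hl, rfl⟩ := ha
        obtain ⟨l', hl', rfl⟩ := hb
        exact ⟨l + l', fun w hw => by simp [hl w hw, hl' w hw], by simp⟩
      | smul r a _ ha =>
        obtain ⟨l, hl, rfl⟩ := ha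
        exact ⟨r • l, fun w hw => by simp [hl w hw], by simp⟩
    choose l hl hlx using fun z => hlam (k z) (hkI z)
    let L : (Z →₀ R) →ₗ[R] (Z →₀ R) :=
      ∑ i ∈ k.support, (l i).smulRight (single i (1 : R))
    have hLx : L (s (single x 1)) = k := by
      simp only [L, LinearMap.sum_apply, LinearMap.smulRight_apply, hlx]
      conv_rhs => rw [← Finsupp.sum_single k]
      exact Finset.sum_congr rfl fun z _ => by simp
    have hL0 : ∀ w : Z →₀ R, (∀ j ∈ B \ A, w j = 0) → L w = 0 := fun w hw => by
      simp [L, LinearMap.sum_apply, hl _ w hw]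
    refine ⟨G - L ∘ₗ s, fun z hz => ?_, fun y hy => ?_⟩
    · have : s (res B (e z)) = 0 := by
        simp [s, hG z hz]
      simp [hG z hz, this]
    · rcases Finset.mem_insert.1 hy with rfl | hy
      · intro z hz
        by_contra hzA
        refine (Finsupp.mem_support_iff.1 (Finset.mem_coe.1 hz)) ?_
        simp only [LinearMap.sub_apply, LinearMap.comp_apply, Finsupp.sub_apply, hLx]
        by_cases hzB : z ∈ B
        · rw [show k z = G (single y 1) z from res_apply_mem _ ⟨hzB, hzA⟩, sub_self]
        · rw [show k z = 0 from res_apply_notMem _ (fun h => hzB h.1),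
            show G (single y 1) z = 0 from res_apply_notMem _ hzB, sub_self]
      · have h0 : L (s (single y 1)) = 0 := by
          refine hL0 _ fun j hj => ?_
          rw [hs y (hS (Finset.mem_insert_of_mem hy)) j hj]
          have : res (B \ A) (G (single y 1)) = 0 := by
            ext z
            by_cases hz : z ∈ B \ A
            · rw [res_apply_mem _ hz, Finsupp.zero_apply]
              by_contra h
              exact hz.2 (hGS y hy (by simpa using h))
            · rw [res_apply_notMem _ hz, Finsupp.zero_apply]
          simp [this]
        simpa [h0] using hGS y hy

lemma res_eq_res {A B : Set Z} (hAB : A ⊆ B) {x : Z →₀ R} (h : ∀ j ∈ B \ A, x j = 0) :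
    res B x = res A x := by
  ext j
  by_cases hA : j ∈ A
  · rw [res_apply_mem _ hA, res_apply_mem _ (hAB hA)]
  · rw [res_apply_notMem _ hA]
    by_cases hB : j ∈ B
    · rw [res_apply_mem _ hB, h j ⟨hB, hA⟩]
    · rw [res_apply_notMem _ hB]

/-- A countable system that is an increasing union of subsystems with a retraction and with flat
successive differences has a retraction. -/
theorem isProj_iUnion {e : Z → Z →₀ R} {A : Set Z} (hA : A.Countable) (X : ℕ → Set Z)
    (hX : Monotone X) (hAX : A = ⋃ t, X t) (hsupp : ∀ t, ∀ z ∈ X t, ∀ j ∈ A \ X t, e z j = 0)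
    (hproj : ∀ t, IsProj e (X t)) (hflat : ∀ t, IsFlat e (X (t + 1) \ X t)) : IsProj e A := by
  classical
  obtain ⟨N, hN⟩ := Set.countable_iff_exists_injOn.1 hA
  have hXA : ∀ t, X t ⊆ A := fun t => hAX ▸ Set.subset_iUnion X t
  have hres : ∀ t, ∀ z ∈ X t, res A (e z) = res (X t) (e z) := fun t z hz =>
    res_eq_res (hXA t) (hsupp t z hz)
  let Y : ℕ → Set Z := fun t => {z | z ∈ X t ∧ N z < t}
  have hYfin : ∀ t, (Y t).Finite := fun t =>
    Set.Finite.of_finite_image ((Set.finite_Iio t).subset (by rintro _ ⟨z, hz, rfl⟩; exact hz.2))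
      (hN.mono fun z hz => hXA t hz.1)
  refine limit X Y hX (fun s t hst z hz => ⟨hX hst hz.1, lt_of_lt_of_le hz.2 hst⟩) hAX.le
    ?_ (fun z _ => supp_res _) ?_ ?_
  · intro z hz
    obtain ⟨t, ht⟩ : ∃ t, z ∈ X t := by simpa using hAX.le hz
    exact Set.mem_iUnion.2 ⟨max t (N z + 1), hX (le_max_left _ _) ht, by simp⟩
  · obtain ⟨G, hG⟩ := hproj 0
    exact ⟨G, fun z hz => by rw [hres 0 z hz, hG z hz]⟩
  · intro t G hG
    obtain ⟨G', hG', hs⟩ := pure_step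
      (fun z hz j hj => hsupp t z hz j ⟨hXA _ hj.1, hj.2⟩) (hflat t) (hproj (t + 1))
      (hYfin t).toFinset (by intro z hz; exact ((hYfin t).mem_toFinset.1 hz).1)
    exact correct (v := fun z => res A (e z)) hG
      (fun z hz => by rw [hres (t + 1) z hz, hG' z hz])
      (fun y hy => hs y ((hYfin t).mem_toFinset.2 hy))

/-! ### Finite linear systems over a domain -/

/-- Over a field every linear map has a generalized inverse. -/
lemma field_generalized_inverse {K V W : Type*} [Field K] [AddCommGroup V] [Module K V]
    [AddCommGroup W] [Module K W] (U : V →ₗ[K] W) :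
    ∃ P : W →ₗ[K] V, ∀ x, U (P (U x)) = U x := by
  obtain ⟨s, hs⟩ := U.rangeRestrict.exists_rightInverse_of_surjective U.range_rangeRestrict
  obtain ⟨p, hp⟩ := (LinearMap.range U).subtype.exists_leftInverse_of_injective
    (LinearMap.range U).ker_subtype
  refine ⟨s ∘ₗ p, fun x => ?_⟩
  have h1 : p (U x) = U.rangeRestrict x := LinearMap.congr_fun hp (U.rangeRestrict x)
  have h2 := LinearMap.congr_fun hs (U.rangeRestrict x)
  simpa [h1] using congrArg Subtype.val h2

/-- A finite system over a domain has a generalized inverse up to a common denominator `d`. -/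
lemma exists_generalized_inverse [IsDomain R] {ι : Type*} [Finite ι] (u : ι → Z →₀ R) :
    ∃ d : R, d ≠ 0 ∧ ∃ V : (Z →₀ R) →ₗ[R] (ι →₀ R), ∀ i,
      linearCombination R u (V (u i)) = d • u i := by
  classical
  have := Fintype.ofFinite ι
  let K := FractionRing R
  let jZ : (Z →₀ R) →ₗ[R] (Z →₀ K) := Finsupp.mapRange.linearMap (Algebra.linearMap R K)
  let jι : (ι →₀ R) →ₗ[R] (ι →₀ K) := Finsupp.mapRange.linearMap (Algebra.linearMap R K)
  have hjZ : Function.Injective jZ :=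
    Finsupp.mapRange_injective _ (by simp) (IsFractionRing.injective R K)
  let U : (ι →₀ K) →ₗ[K] (Z →₀ K) := linearCombination K (fun i => jZ (u i))
  obtain ⟨W, hW⟩ : ∃ W : (Z →₀ K) →ₗ[K] (ι →₀ K), ∀ x, U (W (U x)) = U x := by
    exact field_generalized_inverse U
  let S : Finset Z := Finset.univ.biUnion fun i => (u i).support
  obtain ⟨d, hd⟩ := IsLocalization.exist_integer_multiples_of_finset (nonZeroDivisors R)
    (S.biUnion fun z => Finset.univ.image fun i => W (single z 1) i)
  have hd' : ∀ z ∈ S, ∀ i, ∃ c : R, algebraMap R K c = (d : R) • W (single z 1) i := by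
    intro z hz i
    exact hd _ (Finset.mem_biUnion.2 ⟨z, hz, Finset.mem_image.2 ⟨i, Finset.mem_univ _, rfl⟩⟩)
  choose! c hc using hd'
  let V : (Z →₀ R) →ₗ[R] (ι →₀ R) :=
    linearCombination R fun z => Finsupp.equivFunOnFinite.symm (c z)
  refine ⟨d, nonZeroDivisors.ne_zero d.2, V, fun i => hjZ ?_⟩
  have hU : ∀ x, jZ (linearCombination R u x) = U (jι x) := by
    intro x
    refine LinearMap.congr_fun (f := jZ ∘ₗ linearCombination R u)
      (g := U.restrictScalars R ∘ₗ jι) ?_ x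
    ext i : 2
    simp [U, jι]
  have hV : jι (V (u i)) = (d : R) • W (jZ (u i)) := by
    refine map_congr_supp (jι ∘ₗ V) ((d : R) • (W.restrictScalars R ∘ₗ jZ)) (u i) fun z hz => ?_
    have hzS : z ∈ S := Finset.mem_biUnion.2 ⟨i, Finset.mem_univ _, hz⟩
    ext l
    simp [V, jι, jZ, hc z hzS l]
  have hUi : U (single i 1) = jZ (u i) := by simp [U]
  have hUs : U ((d : R) • W (jZ (u i))) = (d : R) • U (W (jZ (u i))) :=
    LinearMap.map_smul_of_tower U (d : R) _
  rw [hU, hV, hUs, ← hUi, hW, hUi, map_smul]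

/-- A finite system `φ (u i) = b i` with unknown linear form `φ` is solvable over a domain that is
not a field if it is solvable modulo every `r ≠ 0`. The residual of a solution modulo the
denominator `d` of a generalized inverse `V` of `u` is corrected by means of `V`; the compatibility
`β ∘ V ∘ u = d b` needed for this holds modulo every `r ≠ 0`, hence exactly. -/
lemma solve_of_mod [IsDomain R] (hR : ¬ IsField R) {ι : Type*} [Finite ι] (u : ι → Z →₀ R)
    (b : ι → R)
    (h : ∀ r : R, r ≠ 0 → ∃ φ : (Z →₀ R) →ₗ[R] (R ⧸ Ideal.span {r}),
      ∀ i, φ (u i) = Ideal.Quotient.mk _ (b i)) :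
    ∃ φ : (Z →₀ R) →ₗ[R] R, ∀ i, φ (u i) = b i := by
  -- lift the solutions modulo `r` to `R`, with error terms `r * y i`
  have h' : ∀ r : R, r ≠ 0 → ∃ (φ : (Z →₀ R) →ₗ[R] R) (y : (ι →₀ R) →ₗ[R] R),
      ∀ i, b i = φ (u i) + r * y (single i 1) := by
    intro r hr
    obtain ⟨φ, hφ⟩ := h r hr
    choose p hp using fun z => Ideal.Quotient.mk_surjective (φ (single z 1))
    let φ' : (Z →₀ R) →ₗ[R] R := linearCombination R p
    have hφ' : ∀ x, Ideal.Quotient.mk _ (φ' x) = φ x := by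
      intro x
      refine map_congr_supp ((Submodule.mkQ (Ideal.span {r})) ∘ₗ φ') φ x fun z _ => ?_
      simp only [φ', LinearMap.comp_apply, linearCombination_single, one_smul]
      exact hp z
    have : ∀ i, ∃ y, b i - φ' (u i) = y * r := by
      intro i
      have h1 : b i - φ' (u i) ∈ Ideal.span {r} := by
        rw [← Ideal.Quotient.mk_eq_mk_iff_sub_mem, hφ', hφ]
      obtain ⟨y, hy⟩ := Ideal.mem_span_singleton'.1 h1
      exact ⟨y, hy.symm⟩
    choose y hy using this
    refine ⟨φ', linearCombination R y, fun i => ?_⟩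
    simp only [linearCombination_single, one_smul]
    linear_combination hy i
  obtain ⟨d, hd, V, hV⟩ := exists_generalized_inverse u
  let β : (ι →₀ R) →ₗ[R] R := linearCombination R b
  have hβi : ∀ i, β (single i 1) = b i := fun i => by simp [β]
  have hβ : ∀ φ : (Z →₀ R) →ₗ[R] R, ∀ r, ∀ y : (ι →₀ R) →ₗ[R] R,
      (∀ i, b i = φ (u i) + r * y (single i 1)) →
      ∀ x, β x = φ (linearCombination R u x) + r * y x := by
    intro φ r y hy x
    refine LinearMap.congr_fun (f := β) (g := φ ∘ₗ linearCombination R u + r • y) ?_ x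
    ext i
    simp [hβi, hy]
  have hzero : ∀ i, β (V (u i)) = d * b i := by
    intro i
    have hdiv : ∀ r : R, r ≠ 0 → r ∣ β (V (u i)) - d * b i := by
      intro r hr
      obtain ⟨φ, y, hy⟩ := h' r hr
      refine ⟨y (V (u i)) - d * y (single i 1), ?_⟩
      rw [hβ φ r y hy, hV, hy i, map_smul, smul_eq_mul]
      ring
    by_contra hne
    replace hne := sub_ne_zero.2 hne
    set a := β (V (u i)) - d * b i
    -- an element divisible by all nonzero elements is zero: take `r = a * c` with `c` not a unit
    obtain ⟨c, hc0, hc⟩ := Ring.exists_not_isUnit_of_not_isField hR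
    obtain ⟨t, ht⟩ := hdiv (a * c) (mul_ne_zero hne hc0)
    refine hc (IsUnit.of_mul_eq_one (M := R) t ?_)
    exact mul_left_cancel₀ hne (by linear_combination -ht)
  obtain ⟨φ, y, hy⟩ := h' d hd
  refine ⟨φ + y ∘ₗ V, fun i => ?_⟩
  have h1 := hβ φ d y hy (V (u i))
  rw [hzero, hV, map_smul, smul_eq_mul] at h1
  refine mul_left_cancel₀ hd ?_
  simp only [LinearMap.add_apply, LinearMap.comp_apply]
  linear_combination -h1

/-! ### Countable Baer systems -/

lemma isTorsion_quotient [IsDomain R] {r : R} (hr : r ≠ 0) :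
    Module.IsTorsion R (R ⧸ Ideal.span {r}) := by
  intro x
  obtain ⟨a, rfl⟩ := Ideal.Quotient.mk_surjective x
  refine ⟨⟨r, mem_nonZeroDivisors_of_ne_zero hr⟩, ?_⟩
  change Ideal.Quotient.mk _ (r * a) = 0
  exact Ideal.Quotient.eq_zero_iff_mem.2
    (Ideal.mul_mem_right _ _ (Ideal.mem_span_singleton_self r))

lemma isTorsion_dfinsupp {ι : Type*} (T : ι → Type*) [∀ i, AddCommGroup (T i)]
    [∀ i, Module R (T i)] (h : ∀ i, Module.IsTorsion R (T i)) :
    Module.IsTorsion R (Π₀ i, T i) := by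
  classical
  intro x
  induction x using DFinsupp.induction with
  | h0 => exact ⟨1, by simp⟩
  | ha i b f _ _ ih =>
    obtain ⟨a, ha⟩ := @ih
    obtain ⟨c, hc⟩ := h i (x := b)
    refine ⟨c * a, ?_⟩
    rw [smul_add, mul_smul c a f, ha, smul_zero, add_zero, mul_comm, mul_smul,
      ← DFinsupp.single_smul, hc, DFinsupp.single_zero, smul_zero]

/-- For finitely many coordinates `y ∈ Y₀` and all but finitely many `x ∈ A` (those with `N x ≥ m`),
the dual of `x` modulo any `r ≠ 0` can be chosen to vanish on `Y₀`. Otherwise there are bad pairs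
`(x_m, r_m)` with `N x_m ≥ m`, and a linear map to `⨁ₘ R / r_m` realising all these duals at once
has a component that vanishes on the finite set `Y₀`. -/
lemma exists_avoiding [IsDomain R] {e : Z → Z →₀ R} {A : Set Z} (hB : IsBaer e A) {N : Z → ℕ}
    (Y₀ : Finset Z) :
    ∃ m, ∀ x ∈ A, m ≤ N x → ∀ r : R, r ≠ 0 → ∃ φ : (Z →₀ R) →ₗ[R] (R ⧸ Ideal.span {r}),
      (∀ z ∈ A, φ (res A (e z)) = Ideal.Quotient.mk _ (single x (1 : R) z)) ∧
      ∀ y ∈ Y₀, φ (single y 1) = 0 := by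
  classical
  by_contra! H
  choose x hxA hxN r hr H using H
  -- the cutoff at `N z` makes the support finite and loses nothing, since `m ≤ N (x m)`
  let h : Z → Π₀ m, R ⧸ Ideal.span {r m} := fun z =>
    DFinsupp.mk (Finset.range (N z + 1)) fun m => Ideal.Quotient.mk _ (single (x m) (1 : R) z)
  have hh : ∀ z m, h z m = Ideal.Quotient.mk _ (single (x m) (1 : R) z) := by
    intro z m
    simp only [h, DFinsupp.mk_apply, Finset.mem_range]
    split_ifs with hm
    · rfl
    · rw [Finsupp.single_apply, if_neg, map_zero]
      rintro rfl
      exact hm (Nat.lt_succ_of_le (hxN m))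
  obtain ⟨ψ, hψ⟩ := hB _ (isTorsion_dfinsupp _ fun m => isTorsion_quotient (hr m)) h
  let M := Y₀.sup fun y => (ψ (single y 1)).support.sup fun m => m + 1
  obtain ⟨y, hy, hne⟩ := H M (DFinsupp.lapply M ∘ₗ ψ) fun z hz => by
    simp [hψ z hz, hh]
  have h1 : M ∈ (ψ (single y 1)).support := by simpa using hne
  have h2 : M + 1 ≤ (ψ (single y 1)).support.sup fun m => m + 1 :=
    Finset.le_sup (f := fun m => m + 1) h1
  have h3 : ((ψ (single y 1)).support.sup fun m => m + 1) ≤ M :=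
    Finset.le_sup (f := fun y => (ψ (single y 1)).support.sup fun m => m + 1) hy
  omega

/-- Retractions on arbitrary finite sets of rows of a Baer system that map `Y₀` into the span of one
and the same set `{z ∈ A | N z < m}`. -/
lemma exists_finite_retraction [IsDomain R] (hR : ¬ IsField R) {e : Z → Z →₀ R} {A : Set Z}
    (hB : IsBaer e A) (N : Z → ℕ) (Y₀ : Finset Z) :
    ∃ m, ∀ X : Finset Z, (↑X : Set Z) ⊆ A → ∃ g : (Z →₀ R) →ₗ[R] (Z →₀ R),
      (∀ z ∈ X, g (res A (e z)) = single z 1) ∧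
      ∀ y ∈ Y₀, (↑(g (single y 1)).support : Set Z) ⊆ {z | z ∈ A ∧ N z < m} := by
  classical
  obtain ⟨m, hm⟩ := exists_avoiding hB (N := N) Y₀
  refine ⟨m, fun X hX => ?_⟩
  have hφ : ∀ x ∈ X, ∃ φ : (Z →₀ R) →ₗ[R] R,
      (∀ z ∈ X, φ (res A (e z)) = single x (1 : R) z) ∧
      (m ≤ N x → ∀ y ∈ Y₀, φ (single y 1) = 0) := by
    intro x hx
    let Y₁ : Finset Z := if m ≤ N x then Y₀ else ∅
    obtain ⟨φ, hφ⟩ := solve_of_mod hR (ι := X ⊕ Y₁)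
      (Sum.elim (fun z => res A (e z)) (fun y => single y.1 1))
      (Sum.elim (fun z => single x (1 : R) z.1) (fun _ => 0)) (by
        intro r hr
        obtain ⟨φ, h1, h2⟩ : ∃ φ : (Z →₀ R) →ₗ[R] (R ⧸ Ideal.span {r}),
          (∀ z ∈ A, φ (res A (e z)) = Ideal.Quotient.mk _ (single x (1 : R) z)) ∧
          ∀ y ∈ Y₁, φ (single y 1) = 0 := by
          by_cases hmx : m ≤ N x
          · simpa [Y₁, hmx] using hm x (hX hx) hmx r hr
          · obtain ⟨φ, hφ⟩ := hB _ (isTorsion_quotient hr)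
              (fun z => Ideal.Quotient.mk _ (single x (1 : R) z))
            exact ⟨φ, hφ, by simp [Y₁, hmx]⟩
        refine ⟨φ, ?_⟩
        rintro (z | y)
        · exact h1 z (hX z.2)
        · simpa using h2 y y.2)
    refine ⟨φ, fun z hz => hφ (Sum.inl ⟨z, hz⟩), fun hmx y hy => ?_⟩
    exact hφ (Sum.inr ⟨y, by simpa [Y₁, hmx] using hy⟩)
  choose! φ hφ1 hφ2 using hφ
  refine ⟨∑ x ∈ X, (φ x).smulRight (single x (1 : R)), fun z hz => ?_, fun y hy x hx => ?_⟩
  · simp only [LinearMap.sum_apply, LinearMap.smulRight_apply]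
    rw [Finset.sum_eq_single z]
    · simp [hφ1 z hz z hz]
    · intro x hx hxz
      simp [hφ1 x hx z hz, Finsupp.single_eq_of_ne hxz.symm]
    · exact fun h => absurd hz h
  · have h1 : (∑ x ∈ X, (φ x).smulRight (single x (1 : R))) (single y 1) x ≠ 0 := by
      simpa using hx
    simp only [LinearMap.sum_apply, LinearMap.smulRight_apply, Finsupp.finsetSum_apply] at h1
    obtain ⟨x', hx', hne⟩ := Finset.exists_ne_zero_of_sum_ne_zero h1
    obtain rfl : x' = x := by
      by_contra hxx
      exact hne (by simp [Finsupp.single_eq_of_ne (Ne.symm hxx)])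
    refine ⟨hX hx', ?_⟩
    by_contra hmx
    exact hne (by simp [hφ2 x' hx' (not_lt.1 hmx) y hy])

/-- A countable Baer system has a retraction. -/
theorem IsBaer.isProj [IsDomain R] (hR : ¬ IsField R) {e : Z → Z →₀ R} {A : Set Z}
    (hA : A.Countable) (hB : IsBaer e A) : IsProj e A := by
  classical
  obtain ⟨N, hN⟩ := Set.countable_iff_exists_injOn.1 hA
  have hfin : ∀ t, {z | z ∈ A ∧ N z < t}.Finite := fun t =>
    Set.Finite.of_finite_image ((Set.finite_Iio t).subset (by rintro _ ⟨z, hz, rfl⟩; exact hz.2))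
      (hN.mono fun z hz => hz.1)
  choose m hm using fun t : ℕ => exists_finite_retraction hR hB N (hfin t).toFinset
  let M : ℕ → ℕ := fun t => t + ∑ s ∈ Finset.range (t + 1), m s
  have hM : Monotone M := by
    intro s t hst
    exact Nat.add_le_add hst (Finset.sum_le_sum_of_subset
      (Finset.range_subset_range.2 (by omega)))
  have hmM : ∀ t, m t ≤ M t := fun t =>
    (Finset.single_le_sum (f := m) (fun _ _ => Nat.zero_le _)
      (Finset.mem_range.2 (Nat.lt_succ_self t))).trans (Nat.le_add_left _ _)
  have hmono : Monotone fun t => {z | z ∈ A ∧ N z < t} :=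
    fun s t hst z hz => ⟨hz.1, lt_of_lt_of_le hz.2 hst⟩
  have hex : ∀ t s, ∃ g : (Z →₀ R) →ₗ[R] (Z →₀ R),
      (∀ z ∈ {z | z ∈ A ∧ N z < s}, g (res A (e z)) = single z 1) ∧
      ∀ y ∈ {z | z ∈ A ∧ N z < t},
        (↑(g (single y 1)).support : Set Z) ⊆ {z | z ∈ A ∧ N z < m t} := by
    intro t s
    obtain ⟨g, h1, h2⟩ := hm t (hfin s).toFinset
      (fun z hz => ((hfin s).mem_toFinset.1 (Finset.mem_coe.1 hz)).1)
    exact ⟨g, fun z hz => h1 z ((hfin s).mem_toFinset.2 hz),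
      fun y hy => h2 y ((hfin t).mem_toFinset.2 hy)⟩
  refine limit (fun t => {z | z ∈ A ∧ N z < M t}) (fun t => {z | z ∈ A ∧ N z < t})
    (hmono.comp hM) hmono ?_ ?_ (fun z _ => supp_res _) ?_ ?_
  · intro z hz
    exact Set.mem_iUnion.2 ⟨N z + 1, hz, by simp only [M]; omega⟩
  · intro z hz
    exact Set.mem_iUnion.2 ⟨N z + 1, hz, by simp⟩
  · obtain ⟨g, hg, -⟩ := hex 0 (M 0)
    exact ⟨g, hg⟩
  · intro t G hG
    obtain ⟨G', hG', hs⟩ := hex t (M (t + 1))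
    exact correct (v := fun z => res A (e z)) hG hG' fun y hy =>
      (hs y hy).trans (hmono (hmM t))

/-! ### Decomposition of the index set -/

/-- The closure of `z` under the relation `r`. -/
def cl (r : Z → Z → Prop) (z : Z) : Set Z := {y | Relation.ReflTransGen r z y}

lemma cl_mono {r r' : Z → Z → Prop} (h : ∀ x y, r x y → r' x y) (z : Z) : cl r z ⊆ cl r' z :=
  fun _ hy => Relation.ReflTransGen.mono h _ _ hy

/-- `Y` contains all `r`-successors of its elements. -/
def IsClosedUnder (r : Z → Z → Prop) (Y : Set Z) : Prop := ∀ x y, r x y → x ∈ Y → y ∈ Y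

lemma IsClosedUnder.mono {r r' : Z → Z → Prop} {Y : Set Z} (h : IsClosedUnder r' Y)
    (hr : ∀ x y, r x y → r' x y) : IsClosedUnder r Y := fun x y hxy hx => h x y (hr x y hxy) hx

lemma isClosedUnder_cl (r : Z → Z → Prop) (z : Z) : IsClosedUnder r (cl r z) :=
  fun _ _ hxy hx => Relation.ReflTransGen.tail hx hxy

lemma IsClosedUnder.cl_subset {r : Z → Z → Prop} {Y : Set Z} (h : IsClosedUnder r Y) {z : Z}
    (hz : z ∈ Y) : cl r z ⊆ Y := by
  intro y hy
  induction hy with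
  | refl => exact hz
  | tail _ hxy ih => exact h _ _ hxy ih

lemma IsClosedUnder.union {r : Z → Z → Prop} {Y Y' : Set Z} (h : IsClosedUnder r Y)
    (h' : IsClosedUnder r Y') : IsClosedUnder r (Y ∪ Y') := fun x y hxy hx =>
  hx.elim (fun hx => Or.inl (h x y hxy hx)) (fun hx => Or.inr (h' x y hxy hx))

lemma countable_cl {r : Z → Z → Prop} (hr : ∀ z, {y | r z y}.Countable) (z : Z) :
    (cl r z).Countable := by
  let S : ℕ → Set Z := fun n => Nat.rec {z} (fun _ s => s ∪ ⋃ x ∈ s, {y | r x y}) n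
  have hS : ∀ n, (S n).Countable := by
    intro n
    induction n with
    | zero => exact Set.countable_singleton z
    | succ n ih => exact ih.union (ih.biUnion fun x _ => hr x)
  refine (Set.countable_iUnion hS).mono fun y hy => ?_
  induction hy with
  | refl => exact Set.mem_iUnion.2 ⟨0, rfl⟩
  | @tail x y _ hxy ih =>
    obtain ⟨n, hn⟩ := Set.mem_iUnion.1 ih
    exact Set.mem_iUnion.2 ⟨n + 1, Or.inr (Set.mem_iUnion₂.2 ⟨x, hn, hxy⟩)⟩

lemma isFlat_iUnion {e : Z → Z →₀ R} {A : ℕ → Set Z} (hA : Monotone A)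
    (h : ∀ n, IsFlat e (A n)) : IsFlat e (⋃ n, A n) := by
  intro I k hk hI
  have hn : ∀ y ∈ k.support, ∃ t, y ∈ A t := fun y hy => by simpa using hk hy
  choose! n hn using hn
  refine h (k.support.sup n) I k (fun y hy => hA (Finset.le_sup hy) (hn y hy)) fun j hj => ?_
  exact hI j (Set.mem_iUnion.2 ⟨_, hj⟩)

section order
variable [LinearOrder Z] [WellFoundedLT Z]

/-- The level of `z`: the least `w` whose closure contains `z`. -/
noncomputable def lev (r : Z → Z → Prop) (z : Z) : Z :=
  (wellFounded_lt (α := Z)).min {w | z ∈ cl r w} ⟨z, Relation.ReflTransGen.refl⟩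

lemma mem_cl_lev (r : Z → Z → Prop) (z : Z) : z ∈ cl r (lev r z) :=
  (wellFounded_lt (α := Z)).min_mem {w | z ∈ cl r w} _

lemma lev_le {r : Z → Z → Prop} {z w : Z} (h : z ∈ cl r w) : lev r z ≤ w :=
  not_lt.1 ((wellFounded_lt (α := Z)).not_lt_min {w | z ∈ cl r w} h)

lemma lev_le_lev {r : Z → Z → Prop} {z y : Z} (h : r z y) : lev r y ≤ lev r z :=
  lev_le ((mem_cl_lev r z).tail h)

/-- The set of all elements of level `w`. -/
def fib (r : Z → Z → Prop) (w : Z) : Set Z := {z | lev r z = w}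

/-- The union of the closures of the elements less than `w`. -/
def below (r : Z → Z → Prop) (w : Z) : Set Z := {z | ∃ w' < w, z ∈ cl r w'}

lemma isClosedUnder_below (r : Z → Z → Prop) (w : Z) : IsClosedUnder r (below r w) :=
  fun _ _ hxy ⟨w', hw', hx⟩ => ⟨w', hw', hx.tail hxy⟩

lemma fib_eq (r : Z → Z → Prop) (w : Z) : fib r w = cl r w \ below r w := by
  ext z
  constructor
  · rintro rfl
    exact ⟨mem_cl_lev r z, fun ⟨w', hw', hz⟩ => (lev_le hz).not_gt hw'⟩
  · rintro ⟨h1, h2⟩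
    refine (lev_le h1).antisymm (not_lt.1 fun h => h2 ⟨_, h, mem_cl_lev r z⟩)

/-- Enlargement of a relation, keeping countability, after which a fibre of the old relation is Baer
as soon as its rows are supported in it and in a set `Y` closed under the new relation with `w ∉ Y`.
If the fibre of `w` is not Baer, let `h w : Z → T w` witness this. The successors of `z` under the
new relation include the support of `ψ z`, where `ψ` realises all witnesses at once in `⨁ T w`; so
the `w`-component of `ψ` vanishes on `Y`, and refutes the witness. -/
lemma step [IsDomain R] {e : Z → Z →₀ R}
    (hE : ∀ (T : Type u) [AddCommGroup T] [Module R T], Module.IsTorsion R T → ∀ h : Z → T,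
      ∃ g : (Z →₀ R) →ₗ[R] T, ∀ z, g (e z) = h z)
    (r : Z → Z → Prop) :
    ∃ r' : Z → Z → Prop, (∀ x y, r x y → r' x y) ∧
      ((∀ z, {y | r z y}.Countable) → ∀ z, {y | r' z y}.Countable) ∧
      (∀ z, r' z (lev r z)) ∧
      ∀ w Y, IsClosedUnder r' Y → w ∉ Y →
        (∀ z ∈ fib r w, (↑(e z).support : Set Z) ⊆ fib r w ∪ Y) → IsBaer e (fib r w) := by
  classical
  have hT : ∀ w, ∃ (T : Type u) (_ : AddCommGroup T) (_ : Module R T),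
      Module.IsTorsion R T ∧ ∃ h : Z → T,
        (∃ g : (Z →₀ R) →ₗ[R] T, ∀ z ∈ fib r w, g (res (fib r w) (e z)) = h z) →
          IsBaer e (fib r w) := by
    intro w
    by_cases hw : IsBaer e (fib r w)
    · exact ⟨PUnit, inferInstance, inferInstance, fun x => ⟨1, rfl⟩, fun _ => 0, fun _ => hw⟩
    · have hw' := hw
      unfold IsBaer at hw'
      push Not at hw'
      obtain ⟨T, i1, i2, hT, h, hh⟩ := hw'
      refine ⟨T, i1, i2, hT, h, fun ⟨g, hg⟩ => ?_⟩
      obtain ⟨z, hz, hne⟩ := hh g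
      exact absurd (hg z hz) hne
  choose T i1 i2 hT h hh using hT
  obtain ⟨ψ, hψ⟩ := hE (Π₀ w, T w) (isTorsion_dfinsupp T hT)
    (fun z => DFinsupp.single (lev r z) (h (lev r z) z))
  refine ⟨fun x y => r x y ∨ y = lev r x ∨ y ∈ (ψ (single x 1)).support,
    fun x y h => Or.inl h, fun hc z => ?_, fun z => Or.inr (Or.inl rfl),
    fun w Y hY hw hs => hh w ⟨DFinsupp.lapply w ∘ₗ ψ, fun z hz => ?_⟩⟩
  · exact (hc z).union ((Set.countable_singleton (lev r z)).union
      (ψ (single z 1)).support.countable_toSet)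
  · have h1 : (ψ (e z)) w = h w z := by
      obtain rfl : lev r z = w := hz
      rw [hψ, DFinsupp.single_eq_same]
    rw [← h1]
    refine map_congr_supp (DFinsupp.lapply w ∘ₗ ψ ∘ₗ res (fib r w)) (DFinsupp.lapply w ∘ₗ ψ) _
      fun y hy => ?_
    rcases hs z hz hy with hyA | hyY
    · simp [res_single_mem hyA]
    · by_cases hyA : y ∈ fib r w
      · simp [res_single_mem hyA]
      · have h0 : ψ (single y 1) w = 0 := by
          by_contra hne
          exact hw (hY y w (Or.inr (Or.inr (by simpa using hne))) hyY)
        simp [res_single_notMem hyA, h0]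

/-- Closing a relation `r₀` off under `step` gives a relation for which every fibre is an increasing
union of countable systems with a retraction. The successive differences are differences of
`r₀`-closed sets. -/
theorem pass [IsDomain R] (hR : ¬ IsField R) {e : Z → Z →₀ R}
    (hE : ∀ (T : Type u) [AddCommGroup T] [Module R T], Module.IsTorsion R T → ∀ h : Z → T,
      ∃ g : (Z →₀ R) →ₗ[R] T, ∀ z, g (e z) = h z)
    (r₀ : Z → Z → Prop) (hr₀ : ∀ z, {y | r₀ z y}.Countable)
    (hsupp : ∀ z, ∀ y ∈ (e z).support, r₀ z y) :
    ∃ r : Z → Z → Prop, (∀ x y, r₀ x y → r x y) ∧ (∀ z, {y | r z y}.Countable) ∧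
      ∀ w, ∃ A : ℕ → Set Z, Monotone A ∧ fib r w = ⋃ n, A n ∧
        (∀ n, ∀ z ∈ A n, ∀ j ∈ fib r w \ A n, e z j = 0) ∧ (∀ n, IsProj e (A n)) ∧
        ∀ n, ∃ C D, A (n + 1) \ A n = C \ D ∧ IsClosedUnder r₀ C ∧ IsClosedUnder r₀ D := by
  classical
  choose next h1 h2 h3 h4 using step hE
  let rr : ℕ → Z → Z → Prop := fun n => Nat.rec r₀ (fun _ r => next r) n
  have hmono : ∀ m n, m ≤ n → ∀ x y, rr m x y → rr n x y := by
    intro m n hmn x y hxy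
    induction n, hmn using Nat.le_induction with
    | base => exact hxy
    | succ n _ ih => exact h1 (rr n) x y ih
  have hcount : ∀ n z, {y | rr n z y}.Countable := by
    intro n
    induction n with
    | zero => exact hr₀
    | succ n ih => exact h2 (rr n) ih
  let r : Z → Z → Prop := fun x y => ∃ n, rr n x y
  have hrr : ∀ n x y, rr n x y → r x y := fun n x y h => ⟨n, h⟩
  refine ⟨r, hrr 0, fun z => ?_, fun w => ?_⟩
  · have : {y | r z y} = ⋃ n, {y | rr n z y} := by ext; simp [r]
    rw [this]
    exact Set.countable_iUnion fun n => hcount n z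
  -- a fibre is empty when `w` belongs to an earlier closure
  by_cases hw : w ∈ below r w
  · have : fib r w = ∅ := by
      rw [fib_eq, Set.sdiff_eq_empty]
      exact (isClosedUnder_below r w).cl_subset hw
    refine ⟨fun _ => ∅, monotone_const, by simp [this], by simp, fun n => ⟨0, by simp⟩,
      fun n => ⟨∅, ∅, by simp, by simp [IsClosedUnder], by simp [IsClosedUnder]⟩⟩
  let Y := below r w
  have hY : ∀ n, IsClosedUnder (rr n) Y := fun n => (isClosedUnder_below r w).mono (hrr n)
  have hA : ∀ n, fib (rr n) w = cl (rr n) w \ Y := by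
    intro n
    ext z
    constructor
    · rintro rfl
      refine ⟨mem_cl_lev _ z, fun hz => hw ?_⟩
      exact hY (n + 1) z _ (h3 (rr n) z) hz
    · rintro ⟨hz, hzY⟩
      refine (lev_le hz).antisymm (not_lt.1 fun h => hzY ⟨_, h, ?_⟩)
      exact cl_mono (hrr n) _ (mem_cl_lev (rr n) z)
  have hsuppA : ∀ n, ∀ z ∈ cl (rr n) w \ Y,
      (↑(e z).support : Set Z) ⊆ (cl (rr n) w \ Y) ∪ Y := by
    intro n z hz y hy
    by_cases hyY : y ∈ Y
    · exact Or.inr hyY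
    · exact Or.inl ⟨isClosedUnder_cl _ _ z y (hmono 0 n (Nat.zero_le n) z y (hsupp z y hy)) hz.1,
        hyY⟩
  have hBaer : ∀ n, IsBaer e (cl (rr n) w \ Y) := by
    intro n
    have := h4 (rr n) w Y (hY (n + 1)) hw
    rw [hA n] at this
    exact this (hsuppA n)
  refine ⟨fun n => cl (rr n) w \ Y, fun m n hmn => ?_, ?_, ?_, fun n => ?_, fun n => ?_⟩
  · exact Set.sdiff_subset_sdiff_left (cl_mono (hmono m n hmn) w)
  · rw [fib_eq, ← Set.iUnion_sdiff]
    congr 1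
    refine Set.Subset.antisymm (fun z hz => ?_) (Set.iUnion_subset fun n => cl_mono (hrr n) w)
    induction hz with
    | refl => exact Set.mem_iUnion.2 ⟨0, Relation.ReflTransGen.refl⟩
    | @tail x y _ hxy ih =>
      obtain ⟨m, hm⟩ := Set.mem_iUnion.1 ih
      obtain ⟨n, hn⟩ := hxy
      exact Set.mem_iUnion.2 ⟨max m n, Relation.ReflTransGen.tail
        (cl_mono (hmono m _ (le_max_left _ _)) w hm) (hmono n _ (le_max_right _ _) x y hn)⟩
  · rintro n z hz j ⟨hj, hjn⟩
    by_contra hne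
    rw [fib_eq] at hj
    rcases hsuppA n z hz (Finsupp.mem_support_iff.2 hne) with h | h
    · exact hjn h
    · exact hj.2 h
  · exact (hBaer n).isProj hR ((countable_cl (hcount n) w).mono Set.sdiff_subset)
  · refine ⟨cl (rr (n + 1)) w, cl (rr n) w ∪ Y, ?_,
      (isClosedUnder_cl _ w).mono (hmono 0 (n + 1) (Nat.zero_le _)),
      ((isClosedUnder_cl _ w).mono (hmono 0 n (Nat.zero_le _))).union (hY 0)⟩
    ext z
    simp only [Set.mem_sdiff, Set.mem_union]
    tauto

/-- A union of flat levels is flat: look at a bad coefficient of maximal level. Rows of lower level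
have no coordinates there, rows of higher level have coefficients in `I`. -/
lemma isFlat_of_saturated {e : Z → Z →₀ R} (ℓ : Z → Z) (hℓ : ∀ z y, e z y ≠ 0 → ℓ y ≤ ℓ z)
    (hfib : ∀ w, IsFlat e {z | ℓ z = w}) {A : Set Z} (hA : ∀ z z', ℓ z = ℓ z' → z ∈ A → z' ∈ A) :
    IsFlat e A := by
  classical
  intro I k hk hI
  by_contra! hbad
  obtain ⟨z₀, hz₀⟩ := hbad
  let S := k.support.filter fun z => k z ∉ I
  have hz₀S : z₀ ∈ S := by
    simp only [S, Finset.mem_filter, Finsupp.mem_support_iff]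
    exact ⟨fun h => hz₀ (h ▸ I.zero_mem), hz₀⟩
  obtain ⟨z, hz, hmax⟩ := S.exists_max_image ℓ ⟨z₀, hz₀S⟩
  obtain ⟨hzk, hzI⟩ := Finset.mem_filter.1 hz
  refine hzI ?_
  have hzA : z ∈ A := hk hzk
  have hz1 : res {y | ℓ y = ℓ z} k z = k z := res_apply_mem _ rfl
  rw [← hz1]
  refine hfib (ℓ z) I _ (supp_res _) (fun j hj => ?_) z
  have hj' : ℓ j = ℓ z := hj
  have hjA : j ∈ A := hA z j hj'.symm hzA
  have h1 : linearCombination R e (k - res {y | ℓ y = ℓ z} k) j ∈ I := by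
    rw [linearCombination_apply, Finsupp.sum, Finsupp.finsetSum_apply]
    refine I.sum_mem fun y _ => ?_
    rw [Finsupp.smul_apply, smul_eq_mul, Finsupp.sub_apply]
    rcases lt_trichotomy (ℓ y) (ℓ z) with h | h | h
    · have : e y j = 0 := by
        by_contra hne
        exact absurd (hℓ y j hne) (by rw [hj']; exact not_le.2 h)
      simp [this]
    · rw [res_apply_mem (A := {y | ℓ y = ℓ z}) _ h]; simp
    · rw [res_apply_notMem (A := {y | ℓ y = ℓ z}) _ h.ne', sub_zero]
      refine I.mul_mem_right _ ?_
      by_contra hy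
      have hyS : y ∈ S := by
        simp only [S, Finset.mem_filter, Finsupp.mem_support_iff]
        exact ⟨fun h => hy (h ▸ I.zero_mem), hy⟩
      exact absurd (hmax y hyS) (not_le.2 h)
  rw [map_sub, Finsupp.sub_apply] at h1
  have h2 := I.sub_mem (hI j hjA) h1
  simpa using h2

/-- Retractions of all levels of a triangular system glue. Applying them levelwise gives `g₀` with
`g₀ (e z) = z + N z`, where `N z` has lower levels only, and `1 + N` is inverted by recursion. -/
lemma glue {e : Z → Z →₀ R} (ℓ : Z → Z) (hℓ : ∀ z y, e z y ≠ 0 → ℓ y ≤ ℓ z)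
    (hfib : ∀ w, IsProj e {z | ℓ z = w}) :
    ∃ g : (Z →₀ R) →ₗ[R] (Z →₀ R), ∀ z, g (e z) = single z 1 := by
  classical
  choose G hG using hfib
  let g₀ : (Z →₀ R) →ₗ[R] (Z →₀ R) :=
    linearCombination R fun y => res {z | ℓ z = ℓ y} (G (ℓ y) (single y 1))
  let N : Z → Z →₀ R := fun z => g₀ (e z) - single z 1
  have hN : ∀ z y, N z y ≠ 0 → ℓ y < ℓ z := by
    intro z x hne
    by_contra hlt
    rw [not_lt] at hlt
    refine hne ?_
    have hg : g₀ (e z) x = single z (1 : R) x := by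
      by_cases hx : ℓ x = ℓ z
      · rw [← hG (ℓ z) z rfl]
        refine map_congr_supp (Finsupp.lapply x ∘ₗ g₀)
          (Finsupp.lapply x ∘ₗ G (ℓ z) ∘ₗ res {y | ℓ y = ℓ z}) _ fun y hy => ?_
        by_cases hy' : ℓ y = ℓ z
        · simp only [LinearMap.comp_apply, g₀, linearCombination_single, one_smul,
            Finsupp.lapply_apply]
          rw [res_apply_mem (A := {z | ℓ z = ℓ y}) _ (hx.trans hy'.symm),
            res_single_mem (A := {y | ℓ y = ℓ z}) hy', hy']
        · simp only [LinearMap.comp_apply, g₀, linearCombination_single, one_smul,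
            Finsupp.lapply_apply]
          rw [res_apply_notMem (A := {z | ℓ z = ℓ y}) _ (fun h => hy' (Eq.trans (Eq.symm h) hx)),
            res_single_notMem (A := {y | ℓ y = ℓ z}) hy', map_zero, Finsupp.zero_apply]
      · have hzx : z ≠ x := fun h => hx (by rw [h])
        rw [Finsupp.single_apply, if_neg hzx]
        refine map_congr_supp (Finsupp.lapply x ∘ₗ g₀) 0 _ fun y hy => ?_
        simp only [LinearMap.comp_apply, g₀, linearCombination_single, one_smul,
          Finsupp.lapply_apply, LinearMap.zero_apply]
        refine res_apply_notMem (A := {z | ℓ z = ℓ y}) _ fun h => hx (hlt.antisymm' ?_)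
        exact (Eq.le h).trans (hℓ z y (Finsupp.mem_support_iff.1 hy))
    simp [N, hg]
  have hwf : WellFounded (InvImage (· < ·) ℓ) := InvImage.wf ℓ wellFounded_lt
  let u : Z → Z →₀ R := hwf.fix fun z ih => single z 1 -
    ∑ y ∈ (N z).support, if h : ℓ y < ℓ z then N z y • ih y h else 0
  have hu : ∀ z, u z = single z 1 - linearCombination R u (N z) := by
    intro z
    rw [show u z = _ from hwf.fix_eq _ z]
    congr 1
    rw [linearCombination_apply, Finsupp.sum]
    exact Finset.sum_congr rfl fun y hy => dif_pos (hN z y (Finsupp.mem_support_iff.1 hy))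
  refine ⟨linearCombination R u ∘ₗ g₀, fun z => ?_⟩
  have : g₀ (e z) = single z 1 + N z := by simp [N]
  rw [LinearMap.comp_apply, this, map_add, linearCombination_single, one_smul, hu z]
  simp

/-- A system that is Baer as a whole has a retraction. -/
theorem exists_retraction [IsDomain R] (hR : ¬ IsField R) {e : Z → Z →₀ R}
    (hE : ∀ (T : Type u) [AddCommGroup T] [Module R T], Module.IsTorsion R T → ∀ h : Z → T,
      ∃ g : (Z →₀ R) →ₗ[R] T, ∀ z, g (e z) = h z) :
    ∃ g : (Z →₀ R) →ₗ[R] (Z →₀ R), ∀ z, g (e z) = single z 1 := by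
  classical
  obtain ⟨r₁, h01, hc1, h1⟩ := pass hR hE (fun z y => y ∈ (e z).support)
    (fun z => (e z).support.countable_toSet) (fun z y hy => hy)
  have hflat : ∀ w, IsFlat e (fib r₁ w) := by
    intro w
    obtain ⟨A, hA, hAw, -, hproj, -⟩ := h1 w
    rw [hAw]
    exact isFlat_iUnion hA fun n => (hproj n).isFlat
  obtain ⟨r₂, h12, hc2, h2⟩ := pass hR hE (fun z y => r₁ z y ∨ y = lev r₁ z)
    (fun z => (hc1 z).union (Set.countable_singleton _)) (fun z y hy => Or.inl (h01 z y hy))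
  have hsat : ∀ C, IsClosedUnder (fun z y => r₁ z y ∨ y = lev r₁ z) C →
      ∀ z z', lev r₁ z = lev r₁ z' → z ∈ C → z' ∈ C := by
    intro C hC z z' hzz hz
    refine (hC.mono fun x y h => Or.inl h : IsClosedUnder r₁ C).cl_subset
      (hC z _ (Or.inr rfl) hz) ?_
    rw [hzz]
    exact mem_cl_lev r₁ z'
  refine glue (lev r₂) (fun z y hne => lev_le_lev (h12 z y (Or.inl (h01 z y (by simpa using hne)))))
    fun w => ?_
  obtain ⟨A, hA, hAw, hAs, hproj, hCD⟩ := h2 w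
  refine isProj_iUnion (A := fib r₂ w) ?_ A hA hAw hAs hproj fun n => ?_
  · rw [fib_eq]
    exact (countable_cl hc2 w).mono Set.sdiff_subset
  · obtain ⟨C, D, hEq, hC, hD⟩ := hCD n
    rw [hEq]
    refine isFlat_of_saturated (lev r₁)
      (fun z y hne => lev_le_lev (h01 z y (by simpa using hne))) hflat fun z z' hzz hz => ?_
    exact ⟨hsat C hC z z' hzz hz.1, fun h => hz.2 (hsat D hD z' z hzz.symm h)⟩

end order

/-! ### Presentations of a Baer module -/

section
variable {M M' N : Type*} [AddCommGroup M] [Module R M] [AddCommGroup M'] [Module R M']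
  [AddCommGroup N] [Module R N]

lemma exists_factor (q : M →ₗ[R] M') (hq : Function.Surjective q) (f : M →ₗ[R] N)
    (h : ∀ x, q x = 0 → f x = 0) : ∃ f' : M' →ₗ[R] N, ∀ x, f' (q x) = f x := by
  refine ⟨(LinearMap.ker q).liftQ f (fun x hx => h x hx) ∘ₗ
    (q.quotKerEquivOfSurjective hq).symm.toLinearMap, fun x => ?_⟩
  have : (q.quotKerEquivOfSurjective hq).symm (q x) = (LinearMap.ker q).mkQ x := by
    rw [LinearEquiv.symm_apply_eq]; rfl
  rw [LinearMap.comp_apply, LinearEquiv.coe_coe, this]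
  rfl

lemma exists_lift_injective (i : M →ₗ[R] M') (hi : Function.Injective i) (f : N →ₗ[R] M')
    (h : ∀ x, ∃ y, i y = f x) : ∃ f' : N →ₗ[R] M, ∀ x, i (f' x) = f x := by
  refine ⟨(LinearEquiv.ofInjective i hi).symm.toLinearMap ∘ₗ
    f.codRestrict (LinearMap.range i) (fun x => LinearMap.mem_range.2 (h x)), fun x => ?_⟩
  have := congrArg Subtype.val ((LinearEquiv.ofInjective i hi).apply_symm_apply
    (f.codRestrict (LinearMap.range i) (fun x => LinearMap.mem_range.2 (h x)) x))
  exact this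
end

/-- Every map from the submodule `K` to a torsion module extends to the ambient module `F`. -/
def Extends {F : Type u} [AddCommGroup F] [Module R F] (K : Submodule R F) : Prop :=
  ∀ (T : Type u) [AddCommGroup T] [Module R T], Module.IsTorsion R T → ∀ f : K →ₗ[R] T,
    ∃ H : F →ₗ[R] T, ∀ k : K, H k = f k

/-- The splitting property of `B = F / ker q` in extension form: apply it to the pushout of
`F ← ker q → T`. -/
lemma extends_ker {B F : Type u} [AddCommGroup B] [Module R B] [AddCommGroup F] [Module R F]
    (hB : ∀ (T X : Type u) [AddCommGroup T] [Module R T] [AddCommGroup X] [Module R X],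
        Module.IsTorsion R T →
        ∀ (i : T →ₗ[R] X) (p : X →ₗ[R] B),
          Function.Injective i → Function.Surjective p →
          LinearMap.range i = LinearMap.ker p →
          ∃ s : B →ₗ[R] X, p.comp s = LinearMap.id)
    (q : F →ₗ[R] B) (hq : Function.Surjective q) : Extends (LinearMap.ker q) := by
  intro T _ _ hT f
  let P : Submodule R (T × F) := LinearMap.range ((-f).prod (LinearMap.ker q).subtype)
  have hP : ∀ t y, (t, y) ∈ P ↔ ∃ k : LinearMap.ker q, -f k = t ∧ (k : F) = y := by
    intro t y
    exact exists_congr fun k => Prod.mk.injEq _ _ _ _ ▸ Iff.rfl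
  let i : T →ₗ[R] (T × F) ⧸ P := P.mkQ ∘ₗ LinearMap.inl R T F
  let p : (T × F) ⧸ P →ₗ[R] B := P.liftQ (q ∘ₗ LinearMap.snd R T F) (by
    rintro _ ⟨k, rfl⟩
    simp)
  have hp : ∀ t y, p (P.mkQ (t, y)) = q y := fun t y => by simp [p]
  -- in the pushout, an element of `ker q` is identified with its image under `f`
  have hk : ∀ t (k : LinearMap.ker q), P.mkQ (t, (k : F)) = i (t + f k) := by
    intro t k
    simp only [i, LinearMap.comp_apply, LinearMap.inl_apply, Submodule.mkQ_apply]
    rw [Submodule.Quotient.eq, Prod.mk_sub_mk, hP]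
    exact ⟨k, by simp, by simp⟩
  have hi : Function.Injective i := by
    rw [← LinearMap.ker_eq_bot, LinearMap.ker_eq_bot']
    intro t ht
    simp only [i, LinearMap.comp_apply, LinearMap.inl_apply, Submodule.mkQ_apply] at ht
    rw [Submodule.Quotient.mk_eq_zero, hP] at ht
    obtain ⟨k, h1, h2⟩ := ht
    rw [← h1, show k = 0 from Subtype.ext h2]
    simp
  have hker : LinearMap.range i = LinearMap.ker p := by
    ext x
    obtain ⟨⟨t, y⟩, rfl⟩ := P.mkQ_surjective x
    rw [LinearMap.mem_ker, hp]
    constructor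
    · rintro ⟨t', ht'⟩
      rw [← hp t y, ← ht']
      simp [i, p]
    · intro hy
      exact ⟨t + f ⟨y, hy⟩, (hk t ⟨y, hy⟩).symm⟩
  obtain ⟨s, hs⟩ := hB T _ hT i p hi (fun b => by
    obtain ⟨y, rfl⟩ := hq b
    exact ⟨P.mkQ (0, y), hp 0 y⟩) hker
  obtain ⟨H, hH⟩ := exists_lift_injective i hi (P.mkQ ∘ₗ LinearMap.inr R T F - s ∘ₗ q)
    (fun y => by
      have h1 : p (s (q y)) = q y := LinearMap.congr_fun hs (q y)
      have h2 : (P.mkQ ∘ₗ LinearMap.inr R T F - s ∘ₗ q) y ∈ LinearMap.ker p := by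
        rw [LinearMap.mem_ker, LinearMap.sub_apply, map_sub, LinearMap.comp_apply,
          LinearMap.inr_apply, hp, LinearMap.comp_apply, h1, sub_self]
      rwa [← hker] at h2)
  refine ⟨H, fun k => hi ?_⟩
  have h0 : q k = 0 := k.2
  rw [hH, LinearMap.sub_apply, LinearMap.comp_apply, LinearMap.comp_apply, h0, map_zero, sub_zero,
    LinearMap.inr_apply, hk, zero_add]

lemma exists_smul_mem_of_mem_span [IsDomain R] {K V : Type*} [Field K] [Algebra R K]
    [IsFractionRing R K] [AddCommGroup V] [Module R V] [Module K V] [IsScalarTower R K V]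
    (N : Submodule R V) {v : V} (hv : v ∈ Submodule.span K (N : Set V)) :
    ∃ r : R, r ≠ 0 ∧ r • v ∈ N := by
  induction hv using Submodule.span_induction with
  | mem v hv => exact ⟨1, one_ne_zero, by simpa using hv⟩
  | zero => exact ⟨1, one_ne_zero, by simp⟩
  | add v w _ _ hv hw =>
    obtain ⟨r, hr, hv⟩ := hv
    obtain ⟨s, hs, hw⟩ := hw
    refine ⟨r * s, mul_ne_zero hr hs, ?_⟩
    rw [smul_add, mul_comm r s, mul_smul s r v, mul_comm s r, mul_smul r s w]
    exact N.add_mem (N.smul_mem _ hv) (N.smul_mem _ hw)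
  | smul c v _ hv =>
    obtain ⟨r, hr, hv⟩ := hv
    obtain ⟨a, b, hb, rfl⟩ := IsFractionRing.div_surjective (A := R) c
    have hb0 : b ≠ 0 := nonZeroDivisors.ne_zero hb
    have hbK : algebraMap R K b ≠ 0 := by simpa using hb0
    refine ⟨r * b, mul_ne_zero hr hb0, ?_⟩
    have : (r * b) • (algebraMap R K a / algebraMap R K b) • v = a • r • v := by
      rw [← algebraMap_smul K (r * b), ← algebraMap_smul K a, ← algebraMap_smul K r v,
        smul_smul, smul_smul, map_mul]
      congr 1
      field_simp
    rw [this]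
    exact N.smul_mem _ hv

lemma exists_projection {K V : Type*} [Field K] [AddCommGroup V] [Module K V]
    (E : Submodule K V) : ∃ P : V →ₗ[K] V, (∀ v, P v ∈ E) ∧ ∀ v ∈ E, P v = v := by
  obtain ⟨p, hp⟩ := E.subtype.exists_leftInverse_of_injective E.ker_subtype
  refine ⟨E.subtype ∘ₗ p, fun v => (p v).2, fun v hv => ?_⟩
  exact congrArg Subtype.val (LinearMap.congr_fun hp ⟨v, hv⟩)

/-- A submodule `N` of a torsion-free module `G` embeds with torsion cokernel in a module `E`, its
`K`-span, by a map that extends to `G`. Here `G` is embedded in a `K`-vector space by `j`, and the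
extension is `j` followed by a projection onto the span. -/
lemma exists_hull_aux [IsDomain R] {K G V : Type u} [Field K] [Algebra R K] [IsFractionRing R K]
    [AddCommGroup G] [Module R G] [AddCommGroup V] [Module R V] [Module K V] [IsScalarTower R K V]
    (j : G →ₗ[R] V) (hj : Function.Injective j) (N : Submodule R G) :
    ∃ (E : Type u) (_ : AddCommGroup E) (_ : Module R E) (lam : G →ₗ[R] E),
      Function.Injective (lam ∘ₗ N.subtype) ∧ Module.IsTorsion R (E ⧸ N.map lam) := by
  obtain ⟨P, hPE, hP⟩ := exists_projection (Submodule.span K (N.map j : Set V))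
  obtain ⟨E, hE⟩ : ∃ E : Submodule R V, E = (Submodule.span K (N.map j : Set V)).restrictScalars R :=
    ⟨_, rfl⟩
  let lam : G →ₗ[R] E := (P.restrictScalars R ∘ₗ j).codRestrict E fun x => hE ▸ hPE (j x)
  have hlam : ∀ x ∈ N, (lam x : V) = j x := fun x hx =>
    hP _ (Submodule.subset_span ⟨x, hx, rfl⟩)
  refine ⟨E, inferInstance, inferInstance, lam, fun x y hxy => Subtype.ext (hj ?_), fun x => ?_⟩
  · rw [← hlam x x.2, ← hlam y y.2]
    exact congrArg Subtype.val hxy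
  · obtain ⟨v, rfl⟩ := (N.map lam).mkQ_surjective x
    obtain ⟨r, hr, y, hy, hv⟩ := exists_smul_mem_of_mem_span (N.map j) (K := K) (v := v)
      (hE.le v.2)
    refine ⟨⟨r, mem_nonZeroDivisors_of_ne_zero hr⟩, ?_⟩
    change r • (N.map lam).mkQ v = 0
    rw [← map_smul, Submodule.mkQ_apply, Submodule.Quotient.mk_eq_zero]
    exact ⟨y, hy, Subtype.ext ((hlam y hy).trans hv)⟩

lemma exists_hull [IsDomain R] {I : Type u} (N : Submodule R (I →₀ R)) :
    ∃ (E : Type u) (_ : AddCommGroup E) (_ : Module R E) (lam : (I →₀ R) →ₗ[R] E),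
      Function.Injective (lam ∘ₗ N.subtype) ∧ Module.IsTorsion R (E ⧸ N.map lam) :=
  exists_hull_aux (K := FractionRing R)
    (Finsupp.mapRange.linearMap (α := I) (Algebra.linearMap R (FractionRing R)))
    (Finsupp.mapRange_injective _ (by simp) (IsFractionRing.injective R (FractionRing R))) N

/-- A submodule of a projective module with the extension property is projective: any surjection
onto it from a free module has a section. -/
lemma Extends.exists_section [IsDomain R] {F I : Type u} [AddCommGroup F] [Module R F]
    [Module.Projective R F] {K : Submodule R F} (hK : Extends K) (π : (I →₀ R) →ₗ[R] K)
    (hπ : Function.Surjective π) : ∃ σ : K →ₗ[R] (I →₀ R), ∀ k, π (σ k) = k := by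
  obtain ⟨E, _, _, lam, hinj, hT⟩ := exists_hull (LinearMap.ker π)
  obtain ⟨N, hN⟩ : ∃ N, N = (LinearMap.ker π).map lam := ⟨_, rfl⟩
  rw [← hN] at hT
  obtain ⟨f, hf⟩ := exists_factor π hπ (N.mkQ ∘ₗ lam) fun x hx => by
    rw [LinearMap.comp_apply, Submodule.mkQ_apply, Submodule.Quotient.mk_eq_zero, hN]
    exact ⟨x, hx, rfl⟩
  obtain ⟨H, hH⟩ := hK _ hT f
  obtain ⟨H', hH'⟩ := Module.projective_lifting_property N.mkQ H N.mkQ_surjective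
  -- `lam - H' ∘ π` takes its values in `lam (ker π)` and agrees with `lam` on `ker π`
  have hd : ∀ x, ∃ y : LinearMap.ker π, (lam ∘ₗ (LinearMap.ker π).subtype) y
      = (lam - H' ∘ₗ K.subtype ∘ₗ π) x := by
      intro x
      have h1 : (lam - H' ∘ₗ K.subtype ∘ₗ π) x ∈ N := by
        rw [← Submodule.Quotient.mk_eq_zero, ← Submodule.mkQ_apply, LinearMap.sub_apply, map_sub]
        have h2 : N.mkQ (H' (π x)) = H (π x) := LinearMap.congr_fun hH' _
        have h3 : N.mkQ (lam x) = f (π x) := (hf x).symm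
        rw [LinearMap.comp_apply, LinearMap.comp_apply, Submodule.subtype_apply, h2, h3, hH,
          sub_self]
      rw [hN] at h1
      obtain ⟨y, hy, hyx⟩ := h1
      exact ⟨⟨y, hy⟩, hyx⟩
  obtain ⟨d, hd⟩ := exists_lift_injective (M := LinearMap.ker π) (M' := E) (N := I →₀ R)
    (lam ∘ₗ (LinearMap.ker π).subtype) hinj _ hd
  obtain ⟨σ, hσ⟩ := exists_factor π hπ (LinearMap.id - (LinearMap.ker π).subtype ∘ₗ d)
    fun x hx => by
      have h1 : d x = ⟨x, hx⟩ := hinj (by simp [hd, hx])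
      simp [h1]
  refine ⟨σ, fun k => ?_⟩
  obtain ⟨x, rfl⟩ := hπ k
  have h0 : π (d x : I →₀ R) = 0 := (d x).2
  simp [hσ, h0]

/-- `exists_retraction` in coordinate-free form, for two modules free on the same index set. -/
lemma exists_retraction_equiv [IsDomain R] (hR : ¬ IsField R) {Z M P : Type u} [AddCommGroup M]
    [Module R M] [AddCommGroup P] [Module R P] (a : M ≃ₗ[R] (Z →₀ R)) (b : P ≃ₗ[R] (Z →₀ R))
    (E : M →ₗ[R] P)
    (hE : ∀ (T : Type u) [AddCommGroup T] [Module R T], Module.IsTorsion R T →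
      ∀ h : M →ₗ[R] T, ∃ g : P →ₗ[R] T, ∀ x, g (E x) = h x) :
    ∃ g : P →ₗ[R] M, ∀ x, g (E x) = x := by
  obtain ⟨_, _⟩ := exists_wellFoundedLT Z
  obtain ⟨g, hg⟩ := exists_retraction hR (e := fun z => b (E (a.symm (single z 1))))
    fun T _ _ hT h => by
      obtain ⟨g, hg⟩ := hE T hT (linearCombination R h ∘ₗ a.toLinearMap)
      exact ⟨g ∘ₗ b.symm.toLinearMap, fun z => by simp [hg]⟩
  refine ⟨a.symm.toLinearMap ∘ₗ g ∘ₗ b.toLinearMap, fun x => ?_⟩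
  obtain ⟨y, rfl⟩ := a.symm.surjective x
  have : a.symm.toLinearMap ∘ₗ g ∘ₗ b.toLinearMap ∘ₗ E ∘ₗ a.symm.toLinearMap
      = a.symm.toLinearMap := by
    ext z : 2
    simp [hg]
  exact LinearMap.congr_fun this y

/-- A submodule of a free module with the extension property is a direct summand. With a free module
`G = R^(I)` that has `K` as a summand `c G`, and `c' = 1 - c`, the map
`(x_n) ↦ (π x_0, (c' x_n + c x_{n+1})_n)` from `G^(ℕ)` to `F × G^(ℕ)` is the
inclusion `K → F` plus the identity of `G^(ℕ)`, up to the swindle `K ⊕ G^(ℕ) ≅ G^(ℕ)`. -/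
lemma Extends.exists_retraction [IsDomain R] (hR : ¬ IsField R) {J : Type u}
    {K : Submodule R (J →₀ R)} (hK : Extends K) :
    ∃ ρ : (J →₀ R) →ₗ[R] K, ∀ k : K, ρ k = k := by
  classical
  let I : Type u := J ⊕ K
  let π : (I →₀ R) →ₗ[R] K := linearCombination R (Sum.elim (fun _ => 0) id)
  obtain ⟨σ, hσ⟩ := hK.exists_section π fun k => ⟨single (Sum.inr k) 1, by simp [π]⟩
  -- the idempotent endomorphism of `I →₀ R` with image a copy of `K`
  let c : (I →₀ R) →ₗ[R] (I →₀ R) := σ ∘ₗ π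
  let c' : (I →₀ R) →ₗ[R] (I →₀ R) := LinearMap.id - c
  have hcc : ∀ x, c (c x) = c x := fun x => by simp [c, hσ]
  have hπc : ∀ x, π (c x) = π x := fun x => by simp [c, hσ]
  have hc'c : ∀ x, c' (c x) = 0 := fun x => by simp [c', hcc]
  have hcc' : ∀ x, c (c' x) = 0 := fun x => by simp [c', hcc]
  have hc'c' : ∀ x, c' (c' x) = c' x := fun x => by simp [c', hcc]
  have hsum : ∀ x, c' x + c x = x := fun x => by simp [c']
  -- `E` is the swindled inclusion, given by its components `D n` on the summands of `G^(ℕ)`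
  let L : ℕ → (I →₀ R) →ₗ[R] (ℕ →₀ I →₀ R) := fun n => Finsupp.lsingle n
  let D : ℕ → (I →₀ R) →ₗ[R] (J →₀ R) × (ℕ →₀ I →₀ R) := fun n =>
    Nat.rec ((K.subtype ∘ₗ π).prod (L 0 ∘ₗ c'))
      (fun n _ => LinearMap.inr _ _ _ ∘ₗ (L n ∘ₗ c + L (n + 1) ∘ₗ c')) n
  let E : (ℕ →₀ I →₀ R) →ₗ[R] (J →₀ R) × (ℕ →₀ I →₀ R) := Finsupp.lsum ℕ D
  obtain ⟨σe⟩ : Nonempty (J ⊕ (ℕ × I) ≃ ℕ × I) := by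
    have hI : Nonempty I := ⟨Sum.inr 0⟩
    rw [← Cardinal.eq, Cardinal.mk_sum, Cardinal.lift_id, Cardinal.lift_id]
    refine Cardinal.add_eq_right (Cardinal.aleph0_le_mk _) ?_
    exact Cardinal.mk_le_of_injective (f := fun x : J => ((0 : ℕ), (Sum.inl x : I)))
      fun x y h => Sum.inl_injective (Prod.mk.inj h).2
  let a : (ℕ →₀ I →₀ R) ≃ₗ[R] (ℕ × I →₀ R) := (Finsupp.curryLinearEquiv R).symm
  let b : ((J →₀ R) × (ℕ →₀ I →₀ R)) ≃ₗ[R] (ℕ × I →₀ R) :=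
    (LinearEquiv.refl R (J →₀ R)).prodCongr a ≪≫ₗ
      (Finsupp.sumFinsuppLEquivProdFinsupp R).symm ≪≫ₗ Finsupp.domLCongr σe
  have hE : ∀ (T : Type u) [AddCommGroup T] [Module R T], Module.IsTorsion R T →
      ∀ h : (ℕ →₀ I →₀ R) →ₗ[R] T, ∃ g : (J →₀ R) × (ℕ →₀ I →₀ R) →ₗ[R] T,
        ∀ x, g (E x) = h x := by
    intro T _ _ hT h
    obtain ⟨H, hH⟩ := hK T hT ((h ∘ₗ L 0) ∘ₗ σ)
    refine ⟨H.coprod (Finsupp.lsum ℕ fun n => h ∘ₗ L n ∘ₗ c' + h ∘ₗ L (n + 1) ∘ₗ c), fun x => ?_⟩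
    refine LinearMap.congr_fun (f := (H.coprod (Finsupp.lsum ℕ fun n =>
      h ∘ₗ L n ∘ₗ c' + h ∘ₗ L (n + 1) ∘ₗ c)) ∘ₗ E) (g := h) ?_ x
    refine Finsupp.lhom_ext' fun n => LinearMap.ext fun y => ?_
    have key : h (L n (c' y)) + h (L n (c y)) = h (L n y) := by
      rw [← map_add, ← map_add, hsum]
    rcases n with _ | n
    · have hD : E (L 0 y) = ((π y : J →₀ R), L 0 (c' y)) := by simp [E, L, D]
      have hL : ∀ n x, (Finsupp.lsum ℕ fun n => h ∘ₗ L n ∘ₗ c' + h ∘ₗ L (n + 1) ∘ₗ c) (L n x)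
          = h (L n (c' x)) + h (L (n + 1) (c x)) := fun n x => by simp [L]
      change (H.coprod _) (E (L 0 y)) = h (L 0 y)
      rw [hD, LinearMap.coprod_apply, hL, hc'c', hcc', map_zero, map_zero, add_zero, hH, ← key,
        add_comm]
      rfl
    · have hD : E (L (n + 1) y) = (0, L n (c y) + L (n + 1) (c' y)) := by simp [E, L, D]
      have hL : ∀ n x, (Finsupp.lsum ℕ fun n => h ∘ₗ L n ∘ₗ c' + h ∘ₗ L (n + 1) ∘ₗ c) (L n x)
          = h (L n (c' x)) + h (L (n + 1) (c x)) := fun n x => by simp [L]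
      change (H.coprod _) (E (L (n + 1) y)) = h (L (n + 1) y)
      rw [hD, LinearMap.coprod_apply, map_add, hL, hL, hc'c', hcc', hc'c, hcc]
      simp only [map_zero, zero_add, add_zero]
      rw [add_comm, key]
  obtain ⟨g, hg⟩ := exists_retraction_equiv hR (M := ℕ →₀ I →₀ R) (P := (J →₀ R) × (ℕ →₀ I →₀ R)) a b E hE
  refine ⟨π ∘ₗ Finsupp.lapply 0 ∘ₗ g ∘ₗ LinearMap.inl _ _ _, fun k => ?_⟩
  have h1 : E (L 0 (σ k)) = ((k : J →₀ R), 0) := by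
    have : c' (σ k) = 0 := by simp [c', c, hσ]
    simp [E, L, D, hσ, this]
  have h2 := hg (L 0 (σ k))
  rw [h1] at h2
  simp only [LinearMap.comp_apply, LinearMap.inl_apply, h2]
  simp [L, hσ]

end BaerSplitting

theorem baer_modules_are_projective (R : Type u) [CommRing R] [IsDomain R]
    (B : Type u) [AddCommGroup B] [Module R B] :
    Module.Projective R B ↔
      ∀ (T X : Type u) [AddCommGroup T] [Module R T] [AddCommGroup X] [Module R X],
        Module.IsTorsion R T →
        ∀ (i : T →ₗ[R] X) (p : X →ₗ[R] B),
          Function.Injective i → Function.Surjective p →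
          LinearMap.range i = LinearMap.ker p →
          ∃ s : B →ₗ[R] X, p.comp s = LinearMap.id := by
  constructor
  · intro _ T X _ _ _ _ _ i p _ hp _
    exact Module.projective_lifting_property p LinearMap.id hp
  · intro hB
    by_cases hR : IsField R
    · let := hR.toField
      infer_instance
    let q : (B →₀ R) →ₗ[R] B := Finsupp.linearCombination R id
    have hq : Function.Surjective q := Finsupp.linearCombination_id_surjective R B
    obtain ⟨ρ, hρ⟩ := (BaerSplitting.extends_ker hB q hq).exists_retraction hR
    obtain ⟨s, hs⟩ := BaerSplitting.exists_factor q hq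
      (LinearMap.id - (LinearMap.ker q).subtype ∘ₗ ρ) fun x hx => by
        simp [hρ ⟨x, hx⟩]
    refine Module.Projective.of_split s q (LinearMap.ext fun y => ?_)
    obtain ⟨x, rfl⟩ := hq y
    have h0 : q (ρ x : B →₀ R) = 0 := (ρ x).2
    simp [hs, h0]
end

section
/- Let R be a commutative domain that is not a field, and let G be a finitely generated R-module. Then the intersection ⋂_{0 ≠ r ∈ R} rG, taken over all nonzero elements r of R, is the zero submodule. -/
/-!
Choose a maximal linearly independent subset `s` of `G`, with span `F`. By maximality `G ⧸ F` is
torsion, and being finitely generated it is killed by a single `d ≠ 0`, so `d G ⊆ F`. An element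
`x` lying in every `r G` therefore lies in `d r G ⊆ r F` for every `r ≠ 0`. Since `F` is free, each
coordinate of `x` is divisible by every nonzero element of `R`, and in a domain that is not a field
only `0` has this property: if `c ≠ 0` and `a` is a nonzero nonunit, then `c * a ∤ c`.
-/

universe u

/-- In a domain that is not a field, no nonzero element is divisible by all nonzero elements. -/
lemma eq_zero_of_forall_dvd {R : Type*} [CommRing R] [IsDomain R] (hR : ¬IsField R) (c : R)
    (hc : ∀ r : R, r ≠ 0 → r ∣ c) : c = 0 := by
  by_contra h0
  obtain ⟨a, ha0, ha⟩ := Ring.exists_not_isUnit_of_not_isField hR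
  obtain ⟨b, hb⟩ := hc (c * a) (mul_ne_zero h0 ha0)
  exact ha (IsUnit.of_mul_eq_one b (mul_left_cancel₀ h0 (by rw [← mul_assoc, ← hb, mul_one])))

theorem iInf_smul_eq_bot_of_finite (R : Type u) [CommRing R] [IsDomain R]
    (hR : ¬IsField R)
    (G : Type u) [AddCommGroup G] [Module R G] [Module.Finite R G] :
    (⨅ (r : R) (_ : r ≠ 0), LinearMap.range (LinearMap.lsmul R G r)) = ⊥ := by
  obtain ⟨s, hs, hmax⟩ := exists_maximal_linearIndepOn R (id : G → G)
  set F := Submodule.span R (id '' s) with hF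
  have htors : ∀ g : G, ∃ a : R, a ≠ 0 ∧ a • g ∈ F := by
    intro g
    by_cases hg : g ∈ s
    · exact ⟨1, one_ne_zero, by simpa using Submodule.subset_span (by simpa using hg)⟩
    · exact hmax g hg
  -- The product of denominators for a finite generating set serves all of `G`.
  obtain ⟨d, hd0, hd⟩ : ∃ d : R, d ≠ 0 ∧ ∀ g : G, d • g ∈ F := by
    choose a ha0 ha using htors
    obtain ⟨t, ht⟩ := Module.Finite.fg_top (R := R) (M := G)
    refine ⟨∏ g ∈ t, a g, Finset.prod_ne_zero_iff.2 fun g _ => ha0 g, fun g => ?_⟩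
    have hg : g ∈ Submodule.span R (t : Set G) := ht ▸ Submodule.mem_top
    have hle : Submodule.span R (t : Set G) ≤
        F.comap (LinearMap.lsmul R G (∏ g ∈ t, a g)) := by
      refine Submodule.span_le.2 fun y hy => ?_
      obtain ⟨b, hb⟩ := Finset.dvd_prod_of_mem a hy
      simp only [SetLike.mem_coe, Submodule.mem_comap, LinearMap.lsmul_apply]
      rw [hb, mul_comm, mul_smul]
      exact F.smul_mem b (ha y)
    exact hle hg
  have hF' : F = Submodule.span R (Set.range fun i : s => id (i : G)) := by
    rw [hF, Set.image_eq_range]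
  let b := Module.Basis.span hs
  rw [eq_bot_iff]
  intro x hx
  simp only [Submodule.mem_iInf, LinearMap.mem_range, LinearMap.lsmul_apply] at hx
  have hxF : x ∈ Submodule.span R (Set.range fun i : s => id (i : G)) := by
    obtain ⟨g, rfl⟩ := hx d hd0
    exact hF' ▸ hd g
  have hzero : b.repr ⟨x, hxF⟩ = 0 := by
    ext i
    refine eq_zero_of_forall_dvd hR _ fun r hr => ?_
    obtain ⟨g, hg⟩ := hx (r * d) (mul_ne_zero hr hd0)
    have hxr : (⟨x, hxF⟩ : Submodule.span R (Set.range fun i : s => id (i : G))) =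
        r • ⟨d • g, hF' ▸ hd g⟩ := Subtype.ext (by simp [← hg, mul_smul])
    rw [hxr, map_smul, Finsupp.smul_apply, smul_eq_mul]
    exact dvd_mul_right _ _
  have h0 := b.repr.map_eq_zero_iff.1 hzero
  exact (Submodule.mem_bot R).2 (congrArg Subtype.val h0)
end

section
/- Let R be a ring and let B be a countably presented flat right R-module (i.e. B is the cokernel of a map between countably generated free modules, the kernel side being countably generated, and B is flat). Then there exists a countable direct system F₁ →^{f₁} F₂ →^{f₂} F₃ → ⋯ of finitely generated free right R-modules whose direct limit is isomorphic to B; moreover, with ε_n : F_n → ⊕_{k∈ℕ} F_k the canonical inclusions and φ : ⊕_{n∈ℕ} F_n → ⊕_{n∈ℕ} F_n the homomorphism determined by φ∘ε_n = ε_n − ε_{n+1}∘f_n, the sequence 0 → ⊕_{n∈ℕ} F_n →^{φ} ⊕_{n∈ℕ} F_n → B → 0 is exact. -/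
/-!
STATEMENT 4: A countably presented flat module `B` over a ring `R` is the direct
limit of a countable direct system of finitely generated free modules
`F₁ → F₂ → ⋯`; more precisely there is an exact sequence
`0 → ⊕ₙ Fₙ →^φ ⊕ₙ Fₙ → B → 0` where `φ ∘ εₙ = εₙ - ε_{n+1} ∘ fₙ`.

Since `Module.Flat` is only available for commutative rings in Mathlib, flatness
over an arbitrary ring is formulated here through the standard equational
criterion, which is equivalent to "tensoring with `B` preserves injectivity".
-/

universe u

open DirectSum

/-- Flatness of a left `R`-module `B` over an arbitrary ring, expressed through the
equational criterion: every `R`-linear relation `∑ rᵢ • bᵢ = 0` in `B` is a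
consequence of relations holding already in `R`. This is equivalent to the usual
definition that tensoring with `B` preserves injectivity of maps of right
`R`-modules. -/
def IsFlatModule (R : Type u) [Ring R] (B : Type u) [AddCommGroup B] [Module R B] :
    Prop :=
  ∀ (n : ℕ) (r : Fin n → R) (b : Fin n → B), (∑ i, r i • b i) = 0 →
    ∃ (m : ℕ) (a : Fin n → Fin m → R) (y : Fin m → B),
      (∀ j, (∑ i, r i * a i j) = 0) ∧ ∀ i, b i = ∑ j, a i j • y j

/-- The map `φ : ⊕ₙ Fₙ → ⊕ₙ Fₙ` determined by `φ ∘ εₙ = εₙ - ε_{n+1} ∘ fₙ`, for the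
direct system of finitely generated free modules `Fₙ = R^{k n}`. -/
noncomputable def phiMap (R : Type u) [Ring R] (k : ℕ → ℕ)
    (f : ∀ n, (Fin (k n) → R) →ₗ[R] (Fin (k (n + 1)) → R)) :
    (⨁ n, (Fin (k n) → R)) →ₗ[R] ⨁ n, (Fin (k n) → R) :=
  DirectSum.toModule R ℕ (⨁ n, (Fin (k n) → R))
    (fun n => DirectSum.lof R ℕ (fun n => Fin (k n) → R) n
      - (DirectSum.lof R ℕ (fun n => Fin (k n) → R) (n + 1)).comp (f n))

/-!
Lazard's argument, arranged so that only countably many relations ever have to be killed.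
Let `p : R^(ℕ) → B` be the presentation, with `ker p` spanned by `x 0, x 1, …`.

The equational criterion says that a map `R^k → B` killing one vector `u` factors through some
`R^m` in which `u` already dies. Iterating it (`exists_factor`), for finitely generated
submodules `A` and `U ≤ ker p` of `R^(ℕ)` there are maps `h : R^(ℕ) → R^k` and `g : R^k → R^(ℕ)`
such that `h` kills `U` and `p ∘ g ∘ h` agrees with `p` on `A`.

A sequence of such data `(A n, k n, g n, h n)` is chosen with `A n` increasing and exhausting
`R^(ℕ)`, `range (g n) ≤ A (n + 1)`, and with `h (n + 1)` killing `x 0, …, x n` as well as all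
`g n (h n a) - a` for `a ∈ A n`; the latter span a finitely generated submodule of `ker p`.
Put `f n = h (n + 1) ∘ g n` and `β n = p ∘ g n`. Then `β (n + 1) ∘ f n = β n`, the images of the
`β n` exhaust `B`, and `f n ∘ h n = h (n + 1)` on `A n`. If `β m v = 0`, then `y = g m v` lies in
`ker p`, the image of `v` in the `j`-th module is `h j y` for every `j > m`, and this vanishes for
large `j` because `y` is a combination of finitely many `x i`. It follows that `B` is the direct
limit, which is the exactness of the telescope sequence at the middle term and on the right.
Injectivity of `phiMap` holds for every sequence of maps, by looking at components.
-/

/-! ### Factoring finitely many relations through a finite free module -/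

/-- One application of flatness: a map `R^k → B` which factors through the surjection `p` and kills
`u` factors as `p ∘ g' ∘ α` with `α u = 0`. -/
lemma exists_kill_one {R : Type u} [Ring R] {B : Type u} [AddCommGroup B] [Module R B]
    (hflat : IsFlatModule R B) {p : (ℕ →₀ R) →ₗ[R] B} (hp : Function.Surjective p)
    {k : ℕ} (g : (Fin k → R) →ₗ[R] (ℕ →₀ R)) (u : Fin k → R) (hu : p (g u) = 0) :
    ∃ (m : ℕ) (α : (Fin k → R) →ₗ[R] (Fin m → R)) (g' : (Fin m → R) →ₗ[R] (ℕ →₀ R)),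
      α u = 0 ∧ ∀ v, p (g' (α v)) = p (g v) := by
  classical
  obtain ⟨m, a, y, h0, hb⟩ := hflat k u (fun i => p (g (Pi.single i 1))) (by
    rw [← hu]
    conv_rhs => rw [pi_eq_sum_univ' u]
    simp only [map_sum, map_smul])
  choose c hc using fun j => hp (y j)
  refine ⟨m, Fintype.linearCombination R a, Fintype.linearCombination R c, ?_, ?_⟩
  · ext j
    simpa [Fintype.linearCombination_apply] using h0 j
  · have : (p ∘ₗ Fintype.linearCombination R c) ∘ₗ Fintype.linearCombination R a = p ∘ₗ g := by
      refine LinearMap.pi_ext' fun i => LinearMap.ext_ring ?_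
      simp [Fintype.linearCombination_apply, hb, hc, Pi.single_apply]
    exact fun v => LinearMap.congr_fun this v

/-- A finitely generated submodule of `R^(ℕ)` involves only finitely many coordinates, so the
identity on it factors through a finite free module. -/
lemma exists_retract {R : Type u} [Ring R] (A : Submodule R (ℕ →₀ R)) (hA : A.FG) :
    ∃ (k : ℕ) (g : (Fin k → R) →ₗ[R] (ℕ →₀ R)) (h : (ℕ →₀ R) →ₗ[R] (Fin k → R)),
      ∀ a ∈ A, g (h a) = a := by
  classical
  obtain ⟨T, rfl⟩ := hA
  obtain ⟨N, hN⟩ := (T.biUnion Finsupp.support).exists_nat_subset_range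
  refine ⟨N, Fintype.linearCombination R (fun i : Fin N => Finsupp.single (i : ℕ) (1 : R)),
    LinearMap.pi fun i => Finsupp.lapply (i : ℕ), fun a ha => ?_⟩
  induction ha using Submodule.span_induction with
  | zero => simp
  | add a b _ _ ha hb => rw [map_add, map_add, ha, hb]
  | smul r a _ ha => rw [map_smul, map_smul, ha]
  | mem a ha =>
    have hs : a.support ⊆ Finset.range N :=
      (Finset.subset_biUnion_of_mem Finsupp.support ha).trans hN
    simp only [Fintype.linearCombination_apply, LinearMap.pi_apply, Finsupp.lapply_apply,
      Finsupp.smul_single, smul_eq_mul, mul_one]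
    rw [Fin.sum_univ_eq_sum_range (fun i => Finsupp.single i (a i)) N]
    conv_rhs => rw [← Finsupp.sum_single a]
    exact (Finsupp.sum_of_support_subset a hs _ (by simp)).symm

lemma exists_factor_finset {R : Type u} [Ring R] {B : Type u} [AddCommGroup B] [Module R B]
    (hflat : IsFlatModule R B) {p : (ℕ →₀ R) →ₗ[R] B} (hp : Function.Surjective p)
    (U : Finset (ℕ →₀ R)) (hU : ∀ u ∈ U, p u = 0) :
    ∀ A : Submodule R (ℕ →₀ R), A.FG →
    ∃ (k : ℕ) (g : (Fin k → R) →ₗ[R] (ℕ →₀ R)) (h : (ℕ →₀ R) →ₗ[R] (Fin k → R)),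
      (∀ a ∈ A, p (g (h a)) = p a) ∧ ∀ u ∈ U, h u = 0 := by
  classical
  induction U using Finset.induction_on with
  | empty =>
    intro A hA
    obtain ⟨k, g, h, H⟩ := exists_retract A hA
    exact ⟨k, g, h, fun a ha => by rw [H a ha], by simp⟩
  | insert u U _ ih =>
    intro A hA
    -- Enlarging `A` by `u` makes `h u` a relation of the map `p ∘ g`, which flatness can kill.
    obtain ⟨k, g, h, H, HU⟩ := ih (fun v hv => hU v (Finset.mem_insert_of_mem hv))
      (A ⊔ Submodule.span R {u}) (hA.sup (Submodule.fg_span_singleton u))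
    have hu : p (g (h u)) = 0 := by
      rw [H u (Submodule.mem_sup_right (Submodule.mem_span_singleton_self u))]
      exact hU u (Finset.mem_insert_self _ _)
    obtain ⟨m, α, g', hα, hg'⟩ := exists_kill_one hflat hp g (h u) hu
    refine ⟨m, g', α ∘ₗ h, fun a ha => ?_, fun v hv => ?_⟩
    · rw [LinearMap.comp_apply, hg', H a (Submodule.mem_sup_left ha)]
    · rcases Finset.mem_insert.1 hv with rfl | hv
      · exact hα
      · rw [LinearMap.comp_apply, HU v hv, map_zero]

lemma exists_factor {R : Type u} [Ring R] {B : Type u} [AddCommGroup B] [Module R B]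
    (hflat : IsFlatModule R B) {p : (ℕ →₀ R) →ₗ[R] B} (hp : Function.Surjective p)
    (A U : Submodule R (ℕ →₀ R)) (hA : A.FG) (hU : U.FG) (hUp : U ≤ LinearMap.ker p) :
    ∃ (k : ℕ) (g : (Fin k → R) →ₗ[R] (ℕ →₀ R)) (h : (ℕ →₀ R) →ₗ[R] (Fin k → R)),
      (∀ a ∈ A, p (g (h a)) = p a) ∧ ∀ u ∈ U, h u = 0 := by
  obtain ⟨T, rfl⟩ := hU
  obtain ⟨k, g, h, H, HU⟩ := exists_factor_finset hflat hp T
    (fun u hu => hUp (Submodule.subset_span hu)) A hA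
  refine ⟨k, g, h, H, fun u hu => ?_⟩
  exact (Submodule.span_le (p := LinearMap.ker h)).2 HU hu

/-! ### The inductive construction -/

/-- A stage of the construction: a finite free module `R^k` with maps to and from `R^(ℕ)`, and a
finitely generated submodule `A` of `R^(ℕ)` on which `g ∘ h` is the identity modulo `ker p`. -/
structure FlatStage {R : Type u} [Ring R] {B : Type u} [AddCommGroup B] [Module R B]
    (p : (ℕ →₀ R) →ₗ[R] B) where
  A : Submodule R (ℕ →₀ R)
  fg : A.FG
  k : ℕ
  g : (Fin k → R) →ₗ[R] (ℕ →₀ R)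
  h : (ℕ →₀ R) →ₗ[R] (Fin k → R)
  comm : ∀ a ∈ A, p (g (h a)) = p a

/-- The inductive step. Since `t.h` also kills `s.g (s.h a) - a` for `a ∈ s.A`, the transition map
`t.h ∘ s.g` carries `s.h a` to `t.h a`. -/
lemma FlatStage.exists_next {R : Type u} [Ring R] {B : Type u} [AddCommGroup B] [Module R B]
    (hflat : IsFlatModule R B) {p : (ℕ →₀ R) →ₗ[R] B} (hp : Function.Surjective p)
    (x : ℕ → ℕ →₀ R) (hx : ∀ i, p (x i) = 0) (n : ℕ) (s : FlatStage p) :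
    ∃ t : FlatStage p, s.A ≤ t.A ∧ Finsupp.single n 1 ∈ t.A ∧ (∀ v, s.g v ∈ t.A) ∧
      (∀ i ≤ n, t.h (x i) = 0) ∧ ∀ a ∈ s.A, t.h (s.g (s.h a)) = t.h a := by
  classical
  let D : (ℕ →₀ R) →ₗ[R] (ℕ →₀ R) := s.g ∘ₗ s.h - LinearMap.id
  let A' := s.A ⊔ Submodule.span R {Finsupp.single n (1 : R)} ⊔ LinearMap.range s.g
  have hA' : A'.FG := (s.fg.sup (Submodule.fg_span_singleton _)).sup
    (by rw [LinearMap.range_eq_map]; exact Module.Finite.fg_top.map _)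
  let X : Submodule R (ℕ →₀ R) := Submodule.span R (x '' Set.Iic n)
  obtain ⟨k, g, h, H, HU⟩ := exists_factor hflat hp A' (X ⊔ s.A.map D) hA'
    ((Submodule.fg_span ((Set.finite_Iic n).image x)).sup (s.fg.map D)) (by
      refine sup_le (Submodule.span_le.2 ?_) ?_
      · rintro _ ⟨i, -, rfl⟩
        exact hx i
      · rintro _ ⟨a, ha, rfl⟩
        simp [D, s.comm a ha])
  refine ⟨⟨A', hA', k, g, h, H⟩, le_sup_left.trans le_sup_left, ?_, ?_, ?_, ?_⟩
  · exact Submodule.mem_sup_left (Submodule.mem_sup_right (Submodule.mem_span_singleton_self _))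
  · exact fun v => Submodule.mem_sup_right ⟨v, rfl⟩
  · exact fun i hi => HU _ (Submodule.mem_sup_left (Submodule.subset_span ⟨i, hi, rfl⟩))
  · intro a ha
    have := HU (D a) (Submodule.mem_sup_right ⟨a, ha, rfl⟩)
    simpa [D, sub_eq_zero] using this

/-! ### The telescope map -/

section Telescope

variable {R : Type u} [Ring R] (k : ℕ → ℕ)
  (f : ∀ n, (Fin (k n) → R) →ₗ[R] (Fin (k (n + 1)) → R))

lemma phiMap_lof (n : ℕ) (v : Fin (k n) → R) :
    phiMap R k f (DirectSum.lof R ℕ (fun n => Fin (k n) → R) n v) =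
      DirectSum.lof R ℕ (fun n => Fin (k n) → R) n v
        - DirectSum.lof R ℕ (fun n => Fin (k n) → R) (n + 1) (f n v) := by
  simp [phiMap]

lemma phiMap_zero (z : ⨁ n, (Fin (k n) → R)) : phiMap R k f z 0 = z 0 := by
  induction z using DirectSum.induction_on with
  | zero => simp
  | add a b ha hb => rw [map_add, DirectSum.add_apply, DirectSum.add_apply, ha, hb]
  | of i v =>
    change phiMap R k f (DirectSum.lof R ℕ (fun n => Fin (k n) → R) i v) 0 =
      DirectSum.lof R ℕ (fun n => Fin (k n) → R) i v 0
    rw [phiMap_lof, DirectSum.sub_apply, DirectSum.lof_eq_of, DirectSum.lof_eq_of,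
      DirectSum.of_eq_of_ne (i + 1) 0 _ (by omega), sub_zero]

lemma phiMap_succ (z : ⨁ n, (Fin (k n) → R)) (n : ℕ) :
    phiMap R k f z (n + 1) = z (n + 1) - f n (z n) := by
  induction z using DirectSum.induction_on with
  | zero => simp
  | add a b ha hb =>
    simp only [map_add, DirectSum.add_apply, ha, hb]
    abel
  | of i v =>
    change phiMap R k f (DirectSum.lof R ℕ (fun n => Fin (k n) → R) i v) (n + 1) =
      DirectSum.lof R ℕ (fun n => Fin (k n) → R) i v (n + 1)
        - f n (DirectSum.lof R ℕ (fun n => Fin (k n) → R) i v n)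
    rw [phiMap_lof, DirectSum.sub_apply]
    congr 1
    rw [DirectSum.lof_eq_of, DirectSum.lof_eq_of]
    by_cases hi : i = n
    · subst hi
      rw [DirectSum.of_eq_same, DirectSum.of_eq_same]
    · rw [DirectSum.of_eq_of_ne _ _ _ (by omega), DirectSum.of_eq_of_ne _ _ _ (by omega),
        map_zero]

lemma phiMap_injective : Function.Injective (phiMap R k f) := by
  refine (injective_iff_map_eq_zero _).2 fun z hz => ?_
  refine DFinsupp.ext fun n => ?_
  induction n with
  | zero =>
    have := phiMap_zero k f z
    rw [hz] at this
    exact this.symm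
  | succ n ih =>
    have h1 := phiMap_succ k f z n
    rw [hz, show z n = 0 from ih, map_zero, sub_zero] at h1
    exact h1.symm

/-- Modulo the range of the telescope map, a vector is identified with its image in the next
module of the sequence. -/
lemma lof_mem_range_phiMap_iff (n : ℕ) (v : Fin (k n) → R) :
    DirectSum.lof R ℕ (fun n => Fin (k n) → R) n v ∈ LinearMap.range (phiMap R k f) ↔
      DirectSum.lof R ℕ (fun n => Fin (k n) → R) (n + 1) (f n v) ∈
        LinearMap.range (phiMap R k f) := by
  have h : phiMap R k f (DirectSum.lof R ℕ (fun n => Fin (k n) → R) n v) ∈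
    LinearMap.range (phiMap R k f) := ⟨_, rfl⟩
  rw [phiMap_lof] at h
  constructor
  · intro h'
    simpa using sub_mem h' h
  · intro h'
    simpa using add_mem h h'

/-- A vector can be moved to any later module of the sequence, modulo the range of the telescope
map. -/
lemma exists_lof_sub_mem {i j : ℕ} (hij : i ≤ j) (v : Fin (k i) → R) :
    ∃ w, DirectSum.lof R ℕ (fun n => Fin (k n) → R) i v
      - DirectSum.lof R ℕ (fun n => Fin (k n) → R) j w ∈ LinearMap.range (phiMap R k f) := by
  induction j, hij using Nat.le_induction with
  | base => exact ⟨v, by simp⟩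
  | succ j _ ih =>
    obtain ⟨w, hw⟩ := ih
    refine ⟨f j w, ?_⟩
    have h : phiMap R k f (DirectSum.lof R ℕ (fun n => Fin (k n) → R) j w) ∈
      LinearMap.range (phiMap R k f) := ⟨_, rfl⟩
    rw [phiMap_lof] at h
    simpa using add_mem hw h

/-- Modulo the range of the telescope map, every element of the direct sum is concentrated in a
single degree. -/
lemma exists_sub_lof_mem (z : ⨁ n, (Fin (k n) → R)) :
    ∃ j w, z - DirectSum.lof R ℕ (fun n => Fin (k n) → R) j w ∈
      LinearMap.range (phiMap R k f) := by
  induction z using DirectSum.induction_on with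
  | zero => exact ⟨0, 0, by simp⟩
  | of i v =>
    refine ⟨i, v, ?_⟩
    rw [DirectSum.lof_eq_of, sub_self]
    exact zero_mem _
  | add a b ha hb =>
    obtain ⟨i, v, hv⟩ := ha
    obtain ⟨j, w, hw⟩ := hb
    obtain ⟨v', hv'⟩ := exists_lof_sub_mem k f (le_max_left i j) v
    obtain ⟨w', hw'⟩ := exists_lof_sub_mem k f (le_max_right i j) w
    refine ⟨max i j, v' + w', ?_⟩
    convert add_mem (add_mem hv hv') (add_mem hw hw') using 1
    rw [map_add]
    abel

end Telescope

/-! ### The direct limit is `B` -/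

theorem countably_presented_flat_is_countable_direct_limit_of_fg_free
    (R : Type u) [Ring R] (B : Type u) [AddCommGroup B] [Module R B]
    (hflat : IsFlatModule R B)
    (hpres : ∃ p : (ℕ →₀ R) →ₗ[R] B, Function.Surjective p ∧
      ∃ S : Set (ℕ →₀ R), S.Countable ∧ Submodule.span R S = LinearMap.ker p) :
    ∃ (k : ℕ → ℕ) (f : ∀ n, (Fin (k n) → R) →ₗ[R] (Fin (k (n + 1)) → R)),
      Function.Injective (phiMap R k f) ∧
      ∃ q : (⨁ n, (Fin (k n) → R)) →ₗ[R] B,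
        Function.Surjective q ∧ LinearMap.ker q = LinearMap.range (phiMap R k f) := by
  classical
  obtain ⟨p, hp, S, hS, hSp⟩ := hpres
  -- Adding `0` to `S` makes it nonempty, so that it can be enumerated by `ℕ`.
  obtain ⟨x, hxS⟩ := (hS.insert 0).exists_eq_range (Set.insert_nonempty _ _)
  have hx : ∀ i, p (x i) = 0 := by
    intro i
    have : x i ∈ insert 0 S := hxS ▸ Set.mem_range_self i
    rcases this with h | h
    · rw [h, map_zero]
    · exact hSp.le (Submodule.subset_span h)
  choose next hA hsing hg hkill hcomp using FlatStage.exists_next hflat hp x hx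
  let s : ℕ → FlatStage p := fun n =>
    Nat.rec ⟨⊥, Submodule.fg_bot, 0, 0, 0, by simp⟩ (fun n t => next n t) n
  have hs : ∀ n, s (n + 1) = next n (s n) := fun _ => rfl
  have hA' : Monotone fun n => (s n).A := monotone_nat_of_le_succ fun n => hA n (s n)
  -- Every relation dies from some stage on.
  have hev : ∀ y, p y = 0 → ∃ N, ∀ n ≥ N, (s n).h y = 0 := by
    intro y hy
    rw [← LinearMap.mem_ker, ← hSp] at hy
    induction hy using Submodule.span_induction with
    | zero => exact ⟨0, fun _ _ => map_zero _⟩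
    | mem y hy =>
      obtain ⟨i, rfl⟩ : y ∈ Set.range x := hxS ▸ Set.mem_insert_of_mem _ hy
      refine ⟨i + 1, fun n hn => ?_⟩
      obtain ⟨n, rfl⟩ : ∃ m, n = m + 1 := ⟨n - 1, by omega⟩
      exact hkill n (s n) i (by omega)
    | add a b _ _ ha hb =>
      obtain ⟨N, hN⟩ := ha
      obtain ⟨M, hM⟩ := hb
      exact ⟨max N M, fun n hn => by
        rw [map_add, hN n (le_of_max_le_left hn), hM n (le_of_max_le_right hn), add_zero]⟩
    | smul r a _ ha =>
      obtain ⟨N, hN⟩ := ha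
      exact ⟨N, fun n hn => by rw [map_smul, hN n hn, smul_zero]⟩
  let k : ℕ → ℕ := fun n => (s n).k
  let f : ∀ n, (Fin (k n) → R) →ₗ[R] (Fin (k (n + 1)) → R) :=
    fun n => (s (n + 1)).h ∘ₗ (s n).g
  let q : (⨁ n, (Fin (k n) → R)) →ₗ[R] B :=
    DirectSum.toModule R ℕ B fun n => p ∘ₗ (s n).g
  have hq : ∀ n v, q (DirectSum.lof R ℕ (fun n => Fin (k n) → R) n v) = p ((s n).g v) := by
    intro n v
    simp [q]
  have hle : LinearMap.range (phiMap R k f) ≤ LinearMap.ker q := by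
    rw [LinearMap.range_le_ker_iff]
    refine DirectSum.linearMap_ext R fun n => LinearMap.ext fun v => ?_
    simp only [LinearMap.comp_apply, phiMap_lof, map_sub, hq, LinearMap.zero_apply]
    rw [sub_eq_zero]
    exact ((s (n + 1)).comm _ (hg n (s n) v)).symm
  refine ⟨k, f, phiMap_injective k f, q, ?_, le_antisymm ?_ hle⟩
  · have : LinearMap.range p ≤ LinearMap.range q := by
      rintro _ ⟨y, rfl⟩
      induction y using Finsupp.induction_linear with
      | zero => simp
      | add a b ha hb => rw [map_add]; exact add_mem ha hb
      | single n r =>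
        rw [← mul_one r, ← smul_eq_mul, ← Finsupp.smul_single, map_smul]
        refine Submodule.smul_mem _ r
          ⟨DirectSum.lof R ℕ (fun n => Fin (k n) → R) (n + 1)
            ((s (n + 1)).h (Finsupp.single n 1)), ?_⟩
        rw [hq]
        exact (s (n + 1)).comm _ (hsing n (s n))
    rw [← LinearMap.range_eq_top]
    exact top_le_iff.1 ((LinearMap.range_eq_top.2 hp).ge.trans this)
  · intro z hz
    obtain ⟨m, v, hv⟩ := exists_sub_lof_mem k f z
    suffices h : DirectSum.lof R ℕ (fun n => Fin (k n) → R) m v ∈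
        LinearMap.range (phiMap R k f) by
      simpa using add_mem hv h
    have hpv : p ((s m).g v) = 0 := by
      have h1 := hle hv
      rw [LinearMap.mem_ker, map_sub, LinearMap.mem_ker.1 hz, zero_sub, neg_eq_zero, hq] at h1
      exact h1
    obtain ⟨N, hN⟩ := hev _ hpv
    -- Descending from a stage where `g m v` has died, along `f j ∘ h j = h (j + 1)`.
    have key : ∀ d j, m + 1 ≤ j → N ≤ j + d →
        DirectSum.lof R ℕ (fun n => Fin (k n) → R) j ((s j).h ((s m).g v)) ∈
          LinearMap.range (phiMap R k f) := by
      intro d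
      induction d with
      | zero =>
        intro j _ hj
        rw [hN j hj, map_zero]
        exact zero_mem _
      | succ d ih =>
        intro j hmj hj
        rw [lof_mem_range_phiMap_iff]
        have : f j ((s j).h ((s m).g v)) = (s (j + 1)).h ((s m).g v) :=
          hcomp j (s j) _ (hA' hmj (hg m (s m) v))
        rw [this]
        exact ih (j + 1) (by omega) (by omega)
    rw [lof_mem_range_phiMap_iff]
    exact key N (m + 1) le_rfl (by omega)
end

section
/- Let T = (H_n, λ_n)_{n∈ℕ} be a tower of R-modules. The following are equivalent: (1) for every set I, the map Δ_{T^{(I)}} : ∏_{n∈ℕ} (H_n)^{(I)} → ∏_{n∈ℕ} (H_n)^{(I)}, sending (a_n)_{n∈ℕ} to (a_n − Λ'_n(a_{n+1}))_{n∈ℕ} (where Λ'_n : (H_{n+1})^{(I)} → (H_n)^{(I)} is the diagonal map induced by λ_n on each component), is surjective; (2) the map Δ_{T^{(ℕ)}} : ∏_{n∈ℕ} (H_n)^{(ℕ)} → ∏_{n∈ℕ} (H_n)^{(ℕ)} is surjective; (3) T satisfies the Mittag-Leffler condition. -/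
/-!
(1) ⇒ (2) is a specialization.

(2) ⇒ (3): if the images in `H m` are not stationary, every `i` admits some `x ∈ H (m + i)` whose
image `z` in `H m` is not in the image of some later `H (m + j)`. Put `x` in the coordinate `i`
of `(H (m + i))^(ℕ)`, for all `i` at once. A preimage `a` of the resulting family under `Δ` has
`(a m) i ≡ z` modulo the image of `H (m + j)` (`eq_add_towerComp`), so all coordinates of `a m` are
nonzero, which is absurd in a direct sum.

(3) ⇒ (1): the Mittag-Leffler condition passes from `T` to `T^(I)`, because iterated images of
direct sums are computed coordinatewise (`mem_towerImage_dfinsupp`), and it implies that `Δ` is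
surjective (`MittagLeffler.surjective_deltaMap`). For the latter, truncating the formal solution
`a n = b n + λ (b (n + 1)) + λ² (b (n + 2)) + ⋯` far enough out leaves an error lying in the stable
images, and the error is removed recursively since `λ` is surjective between stable images.
-/

/-!
STATEMENT 7 (Theorem 1.3): for a tower `T = (Hₙ, λₙ)` of `R`-modules, the following
are equivalent: (1) `Δ_{T^{(I)}}` is surjective for every set `I` (i.e.
`lim¹ Hₙ^{(I)} = 0`); (2) `Δ_{T^{(ℕ)}}` is surjective; (3) `T` satisfies the
Mittag-Leffler condition.
-/

universe u v

variable {R : Type u} [Ring R]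

/-- For a tower `(Hₙ, λₙ)` of `R`-modules, the composite map
`λ_m ∘ λ_{m+1} ∘ ⋯ ∘ λ_{m+k-1} : H_{m+k} → H_m`. -/
def towerComp {H : ℕ → Type v} [∀ n, AddCommGroup (H n)] [∀ n, Module R (H n)]
    (lam : ∀ n, H (n + 1) →ₗ[R] H n) (m : ℕ) : (k : ℕ) → H (m + k) →ₗ[R] H m
  | 0 => LinearMap.id
  | k + 1 => (towerComp lam m k).comp (lam (m + k))

/-- The Mittag-Leffler condition for the tower `(Hₙ, λₙ)`: for every `m` the
descending chain of images `λ_m ⋯ λ_{m+j-1}(H_{m+j})` in `H_m` is stationary. -/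
def MittagLeffler {H : ℕ → Type v} [∀ n, AddCommGroup (H n)]
    [∀ n, Module R (H n)] (lam : ∀ n, H (n + 1) →ₗ[R] H n) : Prop :=
  ∀ m, ∃ d, ∀ j, d ≤ j →
    Set.range ⇑(towerComp lam m j) = Set.range ⇑(towerComp lam m d)

/-- The map `Δ_T : ∏ₙ Hₙ → ∏ₙ Hₙ`, `(aₙ)ₙ ↦ (aₙ - λₙ(a_{n+1}))ₙ`, whose
surjectivity is the vanishing of `lim¹ Hₙ`. -/
def deltaMap {H : ℕ → Type v} [∀ n, AddCommGroup (H n)] [∀ n, Module R (H n)]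
    (lam : ∀ n, H (n + 1) →ₗ[R] H n) : (∀ n, H n) → ∀ n, H n :=
  fun a n => a n - lam n (a (n + 1))

section Tower

variable {H : ℕ → Type v} [∀ n, AddCommGroup (H n)] [∀ n, Module R (H n)]
  (lam : ∀ n, H (n + 1) →ₗ[R] H n)

/-- The image of the `k`-fold composite map into `H n`. The recursion peels off the last map
applied, whereas `towerComp` peels off the first, so that no transport between `H (n + 1 + k)` and
`H (n + (k + 1))` occurs; see `map_towerComp_towerImage` for the comparison. -/
def towerImage : ℕ → ∀ n, Submodule R (H n)
  | 0, _ => ⊤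
  | k + 1, n => (towerImage k (n + 1)).map (lam n)

theorem map_towerComp_towerImage (m k j : ℕ) :
    (towerImage lam j (m + k)).map (towerComp lam m k) = towerImage lam (j + k) m := by
  induction k generalizing j with
  | zero => simp [towerComp]
  | succ k ih =>
    have h := ih (j + 1)
    rw [towerImage, ← Submodule.map_comp] at h
    rw [show j + (k + 1) = j + 1 + k by omega, ← h]
    rfl

theorem range_towerComp (m k : ℕ) :
    Set.range ⇑(towerComp lam m k) = (towerImage lam k m : Set (H m)) := by
  have h := map_towerComp_towerImage lam m k 0
  rw [zero_add] at h
  rw [← h, towerImage, Submodule.map_top, LinearMap.coe_range]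

theorem mittagLeffler_iff :
    MittagLeffler lam ↔ ∀ m, ∃ d, ∀ j, d ≤ j → towerImage lam j m = towerImage lam d m := by
  simp only [MittagLeffler, range_towerComp, SetLike.coe_set_eq]

theorem towerImage_succ_le (k n : ℕ) : towerImage lam (k + 1) n ≤ towerImage lam k n := by
  induction k generalizing n with
  | zero => exact le_top
  | succ k ih => exact Submodule.map_mono (ih (n + 1))

theorem towerImage_antitone (n : ℕ) : Antitone fun k => towerImage lam k n :=
  antitone_nat_of_succ_le fun k => towerImage_succ_le lam k n

/-- The partial sum `b n + λ (b (n + 1)) + ⋯ + λ^(k-1) (b (n + k - 1))` in `H n` of the formal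
solution of `Δ a = b`. -/
def towerSum (b : ∀ n, H n) : ℕ → ∀ n, H n
  | 0, _ => 0
  | k + 1, n => b n + lam n (towerSum b k (n + 1))

theorem towerSum_sub_mem (b : ∀ n, H n) (r k n : ℕ) (h : r ≤ k) :
    towerSum lam b k n - towerSum lam b r n ∈ towerImage lam r n := by
  induction r generalizing k n with
  | zero => exact Submodule.mem_top
  | succ r ih =>
    obtain ⟨k, rfl⟩ : ∃ k', k = k' + 1 := ⟨k - 1, by omega⟩
    refine ⟨_, ih k (n + 1) (by omega), ?_⟩
    simp [towerSum]

/-- `lim¹` vanishes for Mittag-Leffler towers. -/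
theorem MittagLeffler.surjective_deltaMap (h : MittagLeffler lam) :
    Function.Surjective (deltaMap lam) := by
  intro b
  rw [mittagLeffler_iff] at h
  choose d hd using h
  -- A monotone bound for `d`, so that the truncations at `n` and `n + 1` both pass `d n`.
  let D : ℕ → ℕ := fun n => ∑ i ∈ Finset.range (n + 1), d i
  have hDs : ∀ n, D (n + 1) = D n + d (n + 1) := fun n => Finset.sum_range_succ _ _
  have hdD : ∀ n, d n ≤ D n := fun n =>
    Finset.single_le_sum (f := d) (fun _ _ => Nat.zero_le _) (Finset.self_mem_range_succ n)
  let c : ∀ n, H n := fun n => towerSum lam b (D n) n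
  let e : ∀ n, H n := fun n => b n + lam n (c (n + 1)) - c n
  have he : ∀ n, e n ∈ towerImage lam (d n) n := fun n => by
    rw [← hd n (D n) (hdD n)]
    exact towerSum_sub_mem lam b (D n) (D (n + 1) + 1) n (by rw [hDs]; omega)
  have hsurj : ∀ n (x : towerImage lam (d n) n),
      ∃ y : towerImage lam (d (n + 1)) (n + 1), lam n y = x - e n := by
    intro n x
    have hx : (x : H n) - e n ∈ towerImage lam (D n + d (n + 1) + 1) n :=
      (hd n _ (by have := hdD n; omega)).ge (sub_mem x.2 (he n))
    obtain ⟨y, hy, hyx⟩ := hx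
    rw [SetLike.mem_coe, hd (n + 1) _ (Nat.le_add_left _ _)] at hy
    exact ⟨⟨y, hy⟩, hyx⟩
  choose g hg using hsurj
  let s : ∀ n, towerImage lam (d n) n := fun n => Nat.rec 0 (fun n x => g n x) n
  refine ⟨fun n => c n + (s n).1, funext fun n => ?_⟩
  have hs : lam n (s (n + 1)).1 = (s n).1 - e n := hg n (s n)
  simp only [deltaMap, map_add, hs, e]
  abel

/-- Iterated images of a direct sum of copies of a tower are computed coordinatewise. -/
theorem mem_towerImage_dfinsupp (I : Type) (k n : ℕ) (f : Π₀ _ : I, H n) :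
    f ∈ towerImage (H := fun n => Π₀ _ : I, H n)
        (fun n => DFinsupp.mapRange.linearMap fun _ : I => lam n) k n ↔
      ∀ i, f i ∈ towerImage lam k n := by
  classical
  induction k generalizing n with
  | zero => simp [towerImage]
  | succ k ih =>
    constructor
    · rintro ⟨y, hy, rfl⟩ i
      exact ⟨y i, (ih (n + 1) y).1 hy i, rfl⟩
    · intro hf
      -- A choice of preimages sending `0` to `0`, so that it preserves finite support.
      have hg : ∀ x : H n, ∃ y : H (n + 1), (x = 0 → y = 0) ∧
          (x ∈ towerImage lam (k + 1) n → y ∈ towerImage lam k (n + 1) ∧ lam n y = x) := by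
        intro x
        by_cases hx0 : x = 0
        · exact ⟨0, fun _ => rfl, fun _ => ⟨zero_mem _, by simp [hx0]⟩⟩
        · by_cases hx : x ∈ towerImage lam (k + 1) n
          · obtain ⟨y, hy, hyx⟩ := hx
            exact ⟨y, fun h => absurd h hx0, fun _ => ⟨hy, hyx⟩⟩
          · exact ⟨0, fun _ => rfl, fun h => absurd h hx⟩
      choose g hg0 hg using hg
      refine ⟨DFinsupp.mapRange (fun _ => g) (fun _ => hg0 0 rfl) f, (ih (n + 1) _).2 fun i => ?_, ?_⟩
      · rw [DFinsupp.mapRange_apply]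
        exact (hg _ (hf i)).1
      · ext i
        simpa using (hg _ (hf i)).2

theorem MittagLeffler.dfinsupp (h : MittagLeffler lam) (I : Type) :
    MittagLeffler (H := fun n => Π₀ _ : I, H n)
      (fun n => DFinsupp.mapRange.linearMap fun _ : I => lam n) := by
  rw [mittagLeffler_iff] at h ⊢
  intro m
  obtain ⟨d, hd⟩ := h m
  refine ⟨d, fun j hj => Submodule.ext fun f => ?_⟩
  rw [mem_towerImage_dfinsupp, mem_towerImage_dfinsupp, hd j hj]

/-- If `Δ a` vanishes except possibly at the index `m + i`, then `a m` agrees with the image of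
`(Δ a) (m + i)` modulo the image of `H (m + j)`, for each `j > i`. -/
theorem eq_add_towerComp (a : ∀ n, H n) (m i j : ℕ) (hij : i < j)
    (ha : ∀ n, n ≠ m + i → deltaMap lam a n = 0) :
    a m = towerComp lam m i (deltaMap lam a (m + i)) + towerComp lam m j (a (m + j)) := by
  have h0 : ∀ k, k ≠ i → lam (m + k) (a (m + k + 1)) = a (m + k) := fun k hk =>
    (sub_eq_zero.1 (ha (m + k) (by omega))).symm
  have h1 : ∀ k, k ≤ i → a m = towerComp lam m k (a (m + k)) := by
    intro k
    induction k with
    | zero => intro _; rfl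
    | succ k ih =>
      intro hk
      rw [ih (by omega), ← h0 k (by omega)]
      rfl
  induction j, hij using Nat.le_induction with
  | base =>
    change a m = towerComp lam m i (a (m + i) - lam (m + i) (a (m + i + 1))) +
      towerComp lam m i (lam (m + i) (a (m + i + 1)))
    rw [← map_add, sub_add_cancel]
    exact h1 i le_rfl
  | succ j hj ih =>
    rw [ih, ← h0 j (by omega)]
    rfl

theorem mittagLeffler_of_surjective
    (h : Function.Surjective (deltaMap (H := fun n => Π₀ _ : ℕ, H n)
      (fun n => DFinsupp.mapRange.linearMap fun _ : ℕ => lam n))) :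
    MittagLeffler lam := by
  classical
  by_contra hML
  rw [mittagLeffler_iff] at hML
  push Not at hML
  obtain ⟨m, hm⟩ := hML
  -- `w i` is concentrated at the index `m + i`; its value there is not hit from `H (m + j)`.
  have hw : ∀ i, ∃ w : ∀ n, H n, (∀ n, n ≠ m + i → w n = 0) ∧
      ∃ j, i < j ∧ towerComp lam m i (w (m + i)) ∉ towerImage lam j m := by
    intro i
    obtain ⟨j, hij, hne⟩ := hm i
    have hlt : towerImage lam j m < towerImage lam i m :=
      lt_of_le_of_ne (towerImage_antitone lam m hij) hne
    obtain ⟨z, hzi, hzj⟩ := SetLike.exists_of_lt hlt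
    rw [← SetLike.mem_coe, ← range_towerComp] at hzi
    obtain ⟨x, rfl⟩ := hzi
    refine ⟨Pi.single (m + i) x, fun n hn => Pi.single_eq_of_ne hn x, j, ?_, by simpa using hzj⟩
    exact lt_of_le_of_ne hij fun hji => hne (by rw [hji])
  choose w hw0 hw using hw
  obtain ⟨a, ha⟩ := h fun n => DFinsupp.mk (Finset.range (n + 1)) fun i => w i n
  have hai : ∀ i, deltaMap lam (fun n => a n i) = w i := by
    intro i
    funext n
    have hn := DFunLike.congr_fun (congrFun ha n) i
    rw [DFinsupp.mk_apply] at hn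
    refine (show _ = _ from hn).trans ?_
    split_ifs with hin
    · rfl
    · exact (hw0 i n (by rw [Finset.mem_range] at hin; omega)).symm
  have hne : ∀ i, a m i ≠ 0 := by
    intro i h0
    obtain ⟨j, hij, hj⟩ := hw i
    have key := eq_add_towerComp lam (fun n => a n i) m i j hij
      fun n hn => by rw [hai]; exact hw0 i n hn
    simp only [h0, hai] at key
    apply hj
    rw [eq_neg_of_add_eq_zero_left key.symm, ← SetLike.mem_coe, ← range_towerComp]
    exact ⟨-a (m + j) i, map_neg _ _⟩
  obtain ⟨i, hi⟩ := Infinite.exists_notMem_finset (a m).support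
  exact hi ((a m).mem_support_iff.2 (hne i))

end Tower

theorem lim1_vanishing_iff_MittagLeffler
    (H : ℕ → Type v) [∀ n, AddCommGroup (H n)] [∀ n, Module R (H n)]
    (lam : ∀ n, H (n + 1) →ₗ[R] H n) :
    ((∀ I : Type, Function.Surjective
        (deltaMap (H := fun n => Π₀ _ : I, H n)
          (fun n => DFinsupp.mapRange.linearMap fun _ : I => lam n))) ↔
      Function.Surjective
        (deltaMap (H := fun n => Π₀ _ : ℕ, H n)
          (fun n => DFinsupp.mapRange.linearMap fun _ : ℕ => lam n))) ∧
    (Function.Surjective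
        (deltaMap (H := fun n => Π₀ _ : ℕ, H n)
          (fun n => DFinsupp.mapRange.linearMap fun _ : ℕ => lam n)) ↔
      MittagLeffler lam) :=
  ⟨⟨fun h => h ℕ, fun h I =>
      ((mittagLeffler_of_surjective lam h).dfinsupp lam I).surjective_deltaMap⟩,
    mittagLeffler_of_surjective lam,
    fun h => (h.dfinsupp lam ℕ).surjective_deltaMap⟩
end

section
/- Let R be a ring, let C and C' be R-modules with C finitely generated and C' finitely presented, and let f : C → C' be an R-module homomorphism. Let M be an R-module and N a pure submodule of M. Then, inside Hom_R(C, M), one has {k∘f : k ∈ Hom_R(C', M)} ∩ {h ∈ Hom_R(C, M) : h(C) ⊆ N} = {p∘f : p ∈ Hom_R(C', M), p(C') ⊆ N}; that is, if k : C' → M satisfies k(f(C)) ⊆ N, then there exists p : C' → N with p∘f = k∘f. -/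
/-!
STATEMENT 14 (Lemma 2.8): let `C` be finitely generated, `C'` finitely presented,
`f : C → C'`, and `N` a pure submodule of `M`.  Then inside `Hom_R(C, M)` one has
`Hom_R(C', M)f ∩ Hom_R(C, N) = Hom_R(C', N)f`.

Since the tensor product over a noncommutative ring is not available in Mathlib,
purity of the submodule `N ≤ M` is expressed through the standard equational
characterization (every finite system of `R`-linear equations with constants in
`N` that is solvable in `M` is solvable in `N`), which is equivalent to the
injectivity of `N ⊗_R G → M ⊗_R G` for all finitely presented `G`.
-/

universe u

/-- Equational characterization of purity of the submodule `N` of `M`: any finite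
system of linear equations `∑ⱼ aᵢⱼ yⱼ = xᵢ` with constants `xᵢ ∈ N` having a
solution in `M` has a solution in `N`. -/
def Submodule.IsPureIn {R : Type u} [Ring R] {M : Type u} [AddCommGroup M]
    [Module R M] (N : Submodule R M) : Prop :=
  ∀ (m n : ℕ) (a : Fin m → Fin n → R) (x : Fin m → M),
    (∀ i, x i ∈ N) →
    (∃ y : Fin n → M, ∀ i, (∑ j, a i j • y j) = x i) →
    ∃ z : Fin n → M, (∀ j, z j ∈ N) ∧ ∀ i, (∑ j, a i j • z j) = x i

/-!
A map `k : C' → M` is determined by the images of a finite generating family of `C'`, that is, by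
its pullback along a surjection `π : Rⁿ → C'`. A family `z` in `M` comes from such a map exactly
when it satisfies the finitely many equations `∑ⱼ rᵢⱼ zⱼ = 0`, where the `rᵢ` generate `ker π`, and
the map agrees with `k` on `f(C)` exactly when `∑ⱼ qᵢⱼ zⱼ = k (f cᵢ)`, where the `cᵢ` generate `C`
and `π qᵢ = f cᵢ`. If `k` maps `f(C)` into `N`, all constants of this finite system lie in `N`, and
the system is solvable in `M` by the values of `k`; purity then gives a solution in `N`, which
defines the required `p : C' → M` with image in `N`.
-/

lemma exists_comp_eq_of_ker_le {R A B M : Type*} [Ring R] [AddCommGroup A] [Module R A]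
    [AddCommGroup B] [Module R B] [AddCommGroup M] [Module R M]
    (π : A →ₗ[R] B) (hπ : Function.Surjective π) (φ : A →ₗ[R] M)
    (h : LinearMap.ker π ≤ LinearMap.ker φ) : ∃ p : B →ₗ[R] M, ∀ a, p (π a) = φ a :=
  ⟨(LinearMap.ker π).liftQ φ h ∘ₗ (π.quotKerEquivOfSurjective hπ).symm.toLinearMap,
    fun a => by simp [LinearMap.quotKerEquivOfSurjective_symm_apply]⟩

/-- A linear map `φ` out of a finite free module whose values at finitely many vectors `v i` lie in
the pure submodule `N` can be replaced by one with all values in `N`, without changing the values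
at the `v i`. -/
lemma Submodule.IsPureIn.exists_linearMap {R M : Type u} [Ring R] [AddCommGroup M] [Module R M]
    {N : Submodule R M} (hpure : N.IsPureIn) {m n : ℕ} (v : Fin m → Fin n → R)
    (φ : (Fin n → R) →ₗ[R] M) (hφ : ∀ i, φ (v i) ∈ N) :
    ∃ ψ : (Fin n → R) →ₗ[R] M, (∀ a, ψ a ∈ N) ∧ ∀ i, ψ (v i) = φ (v i) := by
  obtain ⟨z, hzN, hz⟩ := hpure m n v (fun i => φ (v i)) hφ
    ⟨fun j => φ fun l => if j = l then 1 else 0,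
      fun i => (φ.pi_apply_eq_sum_univ (v i)).symm⟩
  refine ⟨Fintype.linearCombination R z, fun a => ?_, fun i => ?_⟩
  · rw [Fintype.linearCombination_apply]
    exact N.sum_mem fun j _ => N.smul_mem _ (hzN j)
  · rw [Fintype.linearCombination_apply, hz i]

theorem hom_pure_submodule_intersection
    (R : Type u) [Ring R]
    (C C' : Type u) [AddCommGroup C] [Module R C] [AddCommGroup C'] [Module R C']
    [Module.Finite R C] [Module.FinitePresentation R C']
    (f : C →ₗ[R] C')
    (M : Type u) [AddCommGroup M] [Module R M] (N : Submodule R M)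
    (hpure : N.IsPureIn) :
    {h : C →ₗ[R] M | ∃ k : C' →ₗ[R] M, h = k.comp f} ∩
        {h : C →ₗ[R] M | ∀ c, h c ∈ N} =
      {h : C →ₗ[R] M | ∃ p : C' →ₗ[R] M, (∀ x, p x ∈ N) ∧ h = p.comp f} := by
  ext h
  constructor
  · rintro ⟨⟨k, rfl⟩, hk⟩
    obtain ⟨n, π, hπ⟩ := Module.Finite.exists_fin' R C'
    have hker : (LinearMap.ker π).FG := Module.FinitePresentation.fg_ker π hπ
    obtain ⟨s, r, hr⟩ := Submodule.fg_iff_exists_fin_generating_family.1 hker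
    obtain ⟨t, c, hc⟩ := Module.Finite.exists_fin (R := R) (M := C)
    choose q hq using fun i => hπ (f (c i))
    have hr0 (i) : π (r i) = 0 := by
      have : r i ∈ LinearMap.ker π := hr ▸ Submodule.subset_span ⟨i, rfl⟩
      simpa using this
    obtain ⟨ψ, hψN, hψ⟩ := hpure.exists_linearMap (Fin.append r q) (k ∘ₗ π) (by
      refine Fin.addCases (fun i => ?_) fun i => ?_
      · simp [hr0]
      · simpa [hq] using hk (c i))
    have hψr (i) : ψ (r i) = 0 := by simpa [hr0] using hψ (Fin.castAdd t i)
    have hψq (i) : ψ (q i) = k (f (c i)) := by simpa [hq] using hψ (Fin.natAdd s i)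
    obtain ⟨p, hp⟩ := exists_comp_eq_of_ker_le π hπ ψ (by
      rw [← hr, Submodule.span_le]
      rintro _ ⟨i, rfl⟩
      exact hψr i)
    refine ⟨p, fun x => ?_, LinearMap.ext_on_range hc fun i => ?_⟩
    · obtain ⟨a, rfl⟩ := hπ x
      exact hp a ▸ hψN a
    · rw [LinearMap.comp_apply, LinearMap.comp_apply, ← hψq, ← hq, hp]
  · rintro ⟨p, hpN, rfl⟩
    exact ⟨⟨p, rfl⟩, fun c => hpN (f c)⟩
end
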